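/- Let X be a Borel subset of the Cantor space 2^ω that is dense in 2^ω, such that the subspace X is homogeneous, first category (meager in itself), and X ∉ Δ. Then there exists a semiideal R on ω such that the subspace R is first category and R ≡_W X as subsets of 2^ω. -/

import Mathlib

open Set

abbrev Cantor := ℕ → Bool

def UpwardClosed (S : Set Cantor) : Prop :=
  ∀ x ∈ S, ∀ y : Cantor, (∀ n, x n = true → y n = true) → y ∈ S

def DownwardClosed (R : Set Cantor) : Prop :=
  ∀ y ∈ R, ∀ x : Cantor, (∀ n, x n = true → y n = true) → x ∈ R

def ClosedUnderFinMod (S : Set Cantor) : Prop :=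
  ∀ x ∈ S, ∀ y : Cantor, {n | x n ≠ y n}.Finite → y ∈ S

def IsSemifilter (S : Set Cantor) : Prop :=
  (fun _ => false) ∉ S ∧ (fun _ => true) ∈ S ∧ UpwardClosed S ∧ ClosedUnderFinMod S

def IsSemiideal (R : Set Cantor) : Prop :=
  (fun _ => false) ∈ R ∧ (fun _ => true) ∉ R ∧ DownwardClosed R ∧ ClosedUnderFinMod R

def ClosedUnderInter (S : Set Cantor) : Prop :=
  ∀ x ∈ S, ∀ y ∈ S, (fun n => x n && y n) ∈ S

def IsFilterOnOmega (F : Set Cantor) : Prop := IsSemifilter F ∧ ClosedUnderInter F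

def IsHomogeneous (X : Type*) [TopologicalSpace X] : Prop :=
  ∀ x y : X, ∃ h : X ≃ₜ X, h x = y

def IsFsigma (A : Set Cantor) : Prop :=
  ∃ F : ℕ → Set Cantor, (∀ n, IsClosed (F n)) ∧ A = ⋃ n, F n

def DOmegaSigmaTwo (X : Set Cantor) : Prop :=
  ∃ A : ℕ → Set Cantor, (∀ n, IsFsigma (A n)) ∧ Monotone A ∧
    X = ⋃ n ∈ {n : ℕ | Odd n}, (A n \ ⋃ m < n, A m)

def InDelta (X : Set Cantor) : Prop := DOmegaSigmaTwo X ∧ DOmegaSigmaTwo Xᶜ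

def WadgeLe (A B : Set Cantor) : Prop :=
  ∃ f : Cantor → Cantor, Continuous f ∧ A = f ⁻¹' B

def WadgeEquiv (A B : Set Cantor) : Prop := WadgeLe A B ∧ WadgeLe B A

def CompletelyMetrizable (X : Type*) [t : TopologicalSpace X] : Prop :=
  ∃ m : MetricSpace X, m.toUniformSpace.toTopologicalSpace = t ∧
    @CompleteSpace X m.toUniformSpace

def FirstCategory (X : Type*) [TopologicalSpace X] : Prop :=
  ∃ f : ℕ → Set X, (∀ n, interior (closure (f n)) = ∅) ∧ (Set.univ : Set X) = ⋃ n, f n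

def CantorFin : Set Cantor := {x | {n | x n = true}.Finite}

def BorelSet (X : Set Cantor) : Prop := @MeasurableSet Cantor (borel Cantor) X

/-- A game tree: positions of each length, with the restriction maps. -/
structure GTree where
  P : ℕ → Type
  r : ∀ n, P (n+1) → P n
  surj : ∀ n, Function.Surjective (r n)
  root : P 0

namespace GTree

def IsBranch (T : GTree) (x : ∀ n, T.P n) : Prop := ∀ n, T.r n (x (n+1)) = x n

theorem nonempty (T : GTree) : ∀ n, Nonempty (T.P n)
  | 0 => ⟨T.root⟩
  | n+1 => by
    obtain ⟨p⟩ := nonempty T n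
    obtain ⟨q, -⟩ := T.surj n p
    exact ⟨q⟩

noncomputable def dflt (T : GTree) (n : ℕ) : T.P n := (T.nonempty n).some

/-- The ancestor of level `m` of a position of level `n` (junk if `n < m`). -/
noncomputable def anc (T : GTree) (m : ℕ) : ∀ n, T.P n → T.P m
  | 0, p => if h : 0 = m then h ▸ p else T.dflt m
  | n+1, p => if h : n+1 = m then h ▸ p else anc T m n (T.r n p)

theorem anc_self (T : GTree) (n : ℕ) (p : T.P n) : T.anc n n p = p := by
  cases n <;> simp [anc]

theorem anc_succ (T : GTree) {m n : ℕ} (h : m ≤ n) (p : T.P (n+1)) :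
    T.anc m (n+1) p = T.anc m n (T.r n p) := by
  have : n + 1 ≠ m := by omega
  simp [anc, this]

theorem r_anc (T : GTree) {m n : ℕ} (h : m + 1 ≤ n) (p : T.P n) :
    T.r m (T.anc (m+1) n p) = T.anc m n p := by
  induction n with
  | zero => omega
  | succ n ih =>
    by_cases hm : m = n
    · subst hm
      rw [anc_self, anc_succ T (le_refl _), anc_self]
    · rw [anc_succ T (by omega), anc_succ T (by omega), ih (by omega)]

theorem anc_branch (T : GTree) {x : ∀ n, T.P n} (hx : T.IsBranch x) {m n : ℕ} (h : m ≤ n) :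
    T.anc m n (x n) = x m := by
  induction n with
  | zero => obtain rfl : m = 0 := by omega
            exact anc_self _ _ _
  | succ n ih =>
    by_cases hm : m = n + 1
    · subst hm; exact anc_self _ _ _
    · rw [anc_succ T (by omega), hx, ih (by omega)]

structure Strat (T : GTree) where
  f : ∀ n, T.P n → T.P (n+1)
  h : ∀ n p, T.r n (f n p) = p

theorem Strat.ext' {T : GTree} {σ τ : Strat T} (h : ∀ n, σ.f n = τ.f n) : σ = τ := by
  cases σ; cases τ
  congr
  funext n
  exact h n

noncomputable def anyStrat (T : GTree) : Strat T where
  f n p := (T.surj n p).choose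
  h n p := (T.surj n p).choose_spec

def Cons {T : GTree} (σ : Strat T) (b : ℕ) (x : ∀ n, T.P n) : Prop :=
  ∀ n, n % 2 = b → x (n+1) = σ.f n (x n)

/-- Winning positions, for the player of parity `b` trying to reach `A`, with ordinal ranks. -/
inductive WinA (T : GTree) (b : ℕ) (A : ∀ n, Set (T.P n)) : Ordinal.{0} → ∀ n, T.P n → Prop
  | hit (α n p) : p ∈ A n → WinA T b A α n p
  | own (α β n p q) : n % 2 = b → T.r n q = p → β < α → WinA T b A β (n+1) q → WinA T b A α n p
  | opp (α n p) (g : T.P (n+1) → Ordinal.{0}) : n % 2 ≠ b → (∀ q, T.r n q = p → g q < α) →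
      (∀ q, T.r n q = p → WinA T b A (g q) (n+1) q) → WinA T b A α n p

def Win (T : GTree) (b : ℕ) (A : ∀ n, Set (T.P n)) (n : ℕ) (p : T.P n) : Prop :=
  ∃ α, WinA T b A α n p

variable {T : GTree} {b : ℕ} {A : ∀ n, Set (T.P n)}

theorem Win.hit {n : ℕ} {p : T.P n} (h : p ∈ A n) : T.Win b A n p := ⟨0, .hit _ _ _ h⟩

theorem Win.own {n : ℕ} {q : T.P (n+1)} (hn : n % 2 = b) (h : T.Win b A (n+1) q) :
    T.Win b A n (T.r n q) := by
  obtain ⟨β, h⟩ := h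
  exact ⟨Order.succ β, .own _ β _ _ q hn rfl (Order.lt_succ β) h⟩

theorem Win.opp {n : ℕ} {p : T.P n} (hn : n % 2 ≠ b)
    (h : ∀ q, T.r n q = p → T.Win b A (n+1) q) : T.Win b A n p := by
  classical
  let g : T.P (n+1) → Ordinal.{0} := fun q => if hq : T.r n q = p then (h q hq).choose else 0
  refine ⟨Order.succ (iSup g), .opp _ _ _ g hn (fun q hq => ?_) (fun q hq => ?_)⟩
  · exact Order.lt_succ_of_le (Ordinal.le_iSup g q)
  · have : g q = (h q hq).choose := by simp [g, hq]
    rw [this]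
    exact (h q hq).choose_spec

theorem Win.exists_own (hA : ∀ n q, T.r n q ∈ A n → q ∈ A (n+1)) {n : ℕ} {p : T.P n}
    (hn : n % 2 = b) (h : T.Win b A n p) : ∃ q, T.r n q = p ∧ T.Win b A (n+1) q := by
  obtain ⟨α, h⟩ := h
  cases h with
  | hit _ _ _ h =>
    obtain ⟨q, rfl⟩ := T.surj n p
    exact ⟨q, rfl, .hit (hA _ _ h)⟩
  | own _ β _ _ q _ hq _ h => exact ⟨q, hq, β, h⟩
  | opp _ _ _ g h => exact absurd hn h

theorem Win.all_opp (hA : ∀ n q, T.r n q ∈ A n → q ∈ A (n+1)) {n : ℕ} {q : T.P (n+1)}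
    (hn : n % 2 ≠ b) (h : T.Win b A n (T.r n q)) : T.Win b A (n+1) q := by
  obtain ⟨α, h⟩ := h
  cases h with
  | hit _ _ _ h => exact .hit (hA _ _ h)
  | own _ β _ _ q h => exact absurd h hn
  | opp _ _ _ g _ _ h => exact ⟨_, h q rfl⟩

theorem Win.exists_desc {n : ℕ} {p : T.P n} (h : T.Win b A n p) :
    ∃ m, n ≤ m ∧ ∃ u : T.P m, T.anc n m u = p ∧ u ∈ A m := by
  obtain ⟨α, h⟩ := h
  have key : ∀ n (p : T.P n) (q : T.P (n+1)), T.r n q = p →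
      (∃ m, n + 1 ≤ m ∧ ∃ u : T.P m, T.anc (n+1) m u = q ∧ u ∈ A m) →
      ∃ m, n ≤ m ∧ ∃ u : T.P m, T.anc n m u = p ∧ u ∈ A m := by
    rintro n p q hq ⟨m, hm, u, hu, hA⟩
    exact ⟨m, by omega, u, by rw [← r_anc T hm, hu, hq], hA⟩
  induction h with
  | hit _ n p h => exact ⟨n, le_rfl, p, anc_self _ _ _, h⟩
  | own _ β n p q _ hq _ _ ih => exact key _ _ q hq ih
  | opp _ n p g _ _ _ ih =>
    obtain ⟨q, hq⟩ := T.surj n p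
    exact key _ _ q hq (ih q hq)

theorem exists_win_strat (T : GTree) (b : ℕ) (A : ∀ n, Set (T.P n)) :
    ∃ w : Strat T, ∀ x, T.IsBranch x → ∀ n₀, T.Win b A n₀ (x n₀) →
      (∀ n, n₀ ≤ n → n % 2 = b → x (n+1) = w.f n (x n)) → ∃ n, n₀ ≤ n ∧ x n ∈ A n := by
  classical
  have key : ∀ n (p : T.P n), ∃ q, T.r n q = p ∧ (n % 2 = b → ∀ α, T.WinA b A α n p →
      p ∈ A n ∨ ∃ β < α, T.WinA b A β (n+1) q) := by
    intro n p
    obtain ⟨q0, hq0⟩ := T.surj n p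
    by_cases hn : n % 2 = b
    swap
    · exact ⟨q0, hq0, fun h => absurd h hn⟩
    by_cases hw : T.Win b A n p
    swap
    · exact ⟨q0, hq0, fun _ α h => absurd ⟨α, h⟩ hw⟩
    have hmin := WellFounded.min_mem Ordinal.lt_wf {α | T.WinA b A α n p} hw
    set α0 := WellFounded.min Ordinal.lt_wf {α | T.WinA b A α n p} hw with hα0
    have hle : ∀ α, T.WinA b A α n p → α0 ≤ α := fun α h =>
      not_lt.1 (WellFounded.not_lt_min Ordinal.lt_wf {α | T.WinA b A α n p} h)
    change T.WinA b A α0 n p at hmin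
    clear_value α0
    cases hmin with
    | hit _ _ _ h => exact ⟨q0, hq0, fun _ α _ => .inl h⟩
    | own _ β _ _ q _ hq hβ h =>
      exact ⟨q, hq, fun _ α hα => .inr ⟨β, hβ.trans_le (hle α hα), h⟩⟩
    | opp _ _ _ g h => exact absurd hn h
  choose w hw1 hw2 using key
  refine ⟨⟨w, hw1⟩, ?_⟩
  rintro x hx n₀ ⟨α, hα⟩ hc
  induction α using WellFoundedLT.induction generalizing n₀ with
  | ind α ih =>
    have fin : ∀ β < α, T.WinA b A β (n₀+1) (x (n₀+1)) → ∃ n, n₀ ≤ n ∧ x n ∈ A n := by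
      intro β hβ hW
      obtain ⟨n, hn, h⟩ := ih β hβ (n₀+1) hW (fun n hn => hc n (by omega))
      exact ⟨n, by omega, h⟩
    by_cases hb : n₀ % 2 = b
    · rcases hw2 n₀ (x n₀) hb α hα with h | ⟨β, hβ, h⟩
      · exact ⟨n₀, le_rfl, h⟩
      · rw [← show x (n₀+1) = w n₀ (x n₀) from hc n₀ le_rfl hb] at h
        exact fin β hβ h
    · cases hα with
      | hit _ _ _ h => exact ⟨n₀, le_rfl, h⟩
      | own _ β _ _ q h => exact absurd h hb
      | opp _ _ _ g _ hg h => exact fin _ (hg _ (hx n₀)) (h _ (hx n₀))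

end GTree

namespace GTree

structure TMap (T' T : GTree) where
  f : ∀ n, T'.P n → T.P n
  comm : ∀ n p, T.r n (f (n+1) p) = f n (T'.r n p)

theorem TMap.branch {T' T : GTree} (f : TMap T' T) {x : ∀ n, T'.P n} (hx : T'.IsBranch x) :
    T.IsBranch (fun n => f.f n (x n)) := fun n => by rw [f.comm, hx]

def TMap.comp {T'' T' T : GTree} (f : TMap T' T) (g : TMap T'' T') : TMap T'' T where
  f n p := f.f n (g.f n p)
  comm n p := by rw [f.comm, g.comm]

/-- A covering (in the sense of Martin) which is trivial up to level `K`. -/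
structure Covering (K : ℕ) (T' T : GTree) where
  π : TMap T' T
  φ : ℕ → Strat T' → Strat T
  loc : ∀ b σ τ n, (∀ m ≤ n, σ.f m = τ.f m) → (φ b σ).f n = (φ b τ).f n
  lift : ∀ b, b < 2 → ∀ σ x, T.IsBranch x → Cons (φ b σ) b x →
    ∃ x', T'.IsBranch x' ∧ Cons σ b x' ∧ ∀ n, π.f n (x' n) = x n
  bij : ∀ n ≤ K, Function.Bijective (π.f n)
  low : ∀ b σ n, n < K → ∀ p, (φ b σ).f n (π.f n p) = π.f (n+1) (σ.f n p)

def Covering.id (K : ℕ) (T : GTree) : Covering K T T where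
  π := ⟨fun _ p => p, fun _ _ => rfl⟩
  φ _ σ := σ
  loc b σ τ n h := h n le_rfl
  lift b _ σ x hx hc := ⟨x, hx, hc, fun _ => rfl⟩
  bij _ _ := Function.bijective_id
  low _ _ _ _ _ := rfl

def Covering.comp {K : ℕ} {T'' T' T : GTree} (c : Covering K T' T) (d : Covering K T'' T') :
    Covering K T'' T where
  π := c.π.comp d.π
  φ b σ := c.φ b (d.φ b σ)
  loc b σ τ n h := c.loc _ _ _ _ fun m hm => d.loc _ _ _ _ fun l hl => h l (hl.trans hm)
  lift b hb σ x hx hc := by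
    obtain ⟨x', hx', hc', h'⟩ := c.lift b hb _ x hx hc
    obtain ⟨x'', hx'', hc'', h''⟩ := d.lift b hb _ x' hx' hc'
    exact ⟨x'', hx'', hc'', fun n => by simp [TMap.comp, h', h'']⟩
  bij n hn := (c.bij n hn).comp (d.bij n hn)
  low b σ n hn p := by simp only [TMap.comp]; rw [c.low b _ n hn, d.low b _ n hn]

def Covering.mono {K K' : ℕ} (h : K ≤ K') {T' T : GTree} (c : Covering K' T' T) :
    Covering K T' T where
  π := c.π
  φ := c.φ
  loc := c.loc
  lift := c.lift
  bij n hn := c.bij n (hn.trans h)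
  low b σ n hn := c.low b σ n (hn.trans_le h)

/-! Inverse limits -/

theorem invlim_ext (i₀ : ℕ) : ∀ (B : ℕ → Type) (f : ∀ i, B (i+1) → B i)
    (_ : ∀ i, i₀ ≤ i → Function.Surjective (f i)) (q : B i₀),
    ∃ y : ∀ i, B i, (∀ i, f i (y (i+1)) = y i) ∧ y i₀ = q := by
  induction i₀ with
  | zero =>
    intro B f h q
    choose g hg using fun i => h i (Nat.zero_le i)
    let y : ∀ i, B i := fun i => Nat.rec q (fun i p => g i p) i
    exact ⟨y, fun i => hg i (y i), rfl⟩
  | succ i₀ ih =>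
    intro B f h q
    obtain ⟨y, hy, hq⟩ := ih (fun i => B (i+1)) (fun i => f (i+1))
      (fun i hi => h (i+1) (by omega)) q
    let y' : ∀ i, B i := fun i => match i with
      | 0 => f 0 (y 0)
      | i+1 => y i
    refine ⟨y', fun i => ?_, hq⟩
    cases i with
    | zero => rfl
    | succ i => exact hy i

theorem invlim_inj {B : ℕ → Type} {f : ∀ i, B (i+1) → B i} {i₀ : ℕ}
    (h : ∀ i, i₀ ≤ i → Function.Injective (f i)) {y z : ∀ i, B i}
    (hy : ∀ i, f i (y (i+1)) = y i) (hz : ∀ i, f i (z (i+1)) = z i) (h0 : y i₀ = z i₀) :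
    y = z := by
  have up : ∀ i, i₀ ≤ i → y i = z i := by
    intro i hi
    induction i, hi using Nat.le_induction with
    | base => exact h0
    | succ i hi ih => exact h i hi (by rw [hy, hz, ih])
  have down : ∀ d i, i + d = i₀ → y i = z i := by
    intro d
    induction d with
    | zero => intro i hi; exact up i (by omega)
    | succ d ih => intro i hi; rw [← hy, ← hz, ih (i+1) (by omega)]
  funext i
  by_cases hi : i₀ ≤ i
  · exact up i hi
  · exact down (i₀ - i) i (by omega)

section limit

variable {K : ℕ} {T : ℕ → GTree} (c : ∀ i, Covering (K + 1 + i) (T (i+1)) (T i))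

def limP (n : ℕ) : Type := {y : ∀ i, (T i).P n // ∀ i, (c i).π.f n (y (i+1)) = y i}

theorem limP_ext (n i₀ : ℕ) (h : n ≤ K + 1 + i₀) (q : (T i₀).P n) :
    ∃ y : limP c n, y.1 i₀ = q := by
  obtain ⟨y, hy, hq⟩ := invlim_ext i₀ (fun i => (T i).P n) (fun i => (c i).π.f n)
    (fun i hi => ((c i).bij n (by omega)).2) q
  exact ⟨⟨y, hy⟩, hq⟩

theorem limP_inj (n i₀ : ℕ) (h : n ≤ K + 1 + i₀) {y z : limP c n} (hyz : y.1 i₀ = z.1 i₀) :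
    y = z :=
  Subtype.ext (invlim_inj (f := fun i => (c i).π.f n) (i₀ := i₀)
    (fun i hi => ((c i).bij n (by omega)).1) y.2 z.2 hyz)

noncomputable def limT : GTree where
  P := limP c
  r n y := ⟨fun i => (T i).r n (y.1 i), fun i => by rw [← (c i).π.comm, y.2]⟩
  surj n y := by
    obtain ⟨q, hq⟩ := (T n).surj n (y.1 n)
    obtain ⟨z, hz⟩ := limP_ext c (n+1) n (by omega) q
    exact ⟨z, limP_inj c n n (by omega) (by simp [hz, hq])⟩
  root := (limP_ext c 0 0 (by omega) (T 0).root).choose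

def limMap (i : ℕ) : TMap (limT c) (T i) where
  f n y := y.1 i
  comm n y := rfl

open Classical in
noncomputable def limTau (σ : Strat (limT c)) (i : ℕ) : Strat (T i) where
  f n q := if h : ∃ y : limP c n, y.1 i = q then (limMap c i).f (n+1) (σ.f n h.choose)
    else (T i).anyStrat.f n q
  h n q := by
    split_ifs with h
    · exact ((limMap c i).comm n _).trans
        ((congrArg ((limMap c i).f n) (σ.h n h.choose)).trans h.choose_spec)
    · exact (T i).anyStrat.h n q

theorem limTau_apply (σ : Strat (limT c)) (i n : ℕ) (h : n ≤ K + 1 + i) (y : limP c n) :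
    (limTau c σ i).f n (y.1 i) = (limMap c i).f (n+1) (σ.f n y) := by
  have hex : ∃ z : limP c n, z.1 i = y.1 i := ⟨y, rfl⟩
  have : hex.choose = y := limP_inj c n i h hex.choose_spec
  simp only [limTau, dif_pos hex]
  rw [this]

noncomputable def limRho (b : ℕ) (σ : Strat (limT c)) : ∀ (_ i : ℕ), Strat (T i)
  | 0, i => limTau c σ i
  | d+1, i => (c i).φ b (limRho b σ d (i+1))

theorem limRho_step (b : ℕ) (σ : Strat (limT c)) (d : ℕ) : ∀ i n, n < K + 1 + i + d →
    (limRho c b σ d i).f n = (limRho c b σ (d+1) i).f n := by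
  induction d with
  | zero =>
    intro i n hn
    funext q
    obtain ⟨y, hy⟩ := limP_ext c n i (by omega) q
    simp only [limRho]
    have h1 := limTau_apply c σ i n (by omega) y
    have h2 := limTau_apply c σ (i+1) n (by omega) y
    rw [← hy, h1, ← y.2 i, (c i).low b _ n (by omega), h2]
    exact ((σ.f n y).2 i).symm
  | succ d ih =>
    intro i n hn
    change ((c i).φ b (limRho c b σ d (i+1))).f n = ((c i).φ b (limRho c b σ (d+1) (i+1))).f n
    exact (c i).loc _ _ _ _ fun m hm => ih (i+1) m (by omega)

theorem limRho_stab (b : ℕ) (σ : Strat (limT c)) (d e : ℕ) (hde : d ≤ e) (i n : ℕ)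
    (hn : n < K + 1 + i + d) : (limRho c b σ d i).f n = (limRho c b σ e i).f n := by
  induction e, hde using Nat.le_induction with
  | base => rfl
  | succ e he ih => rw [ih, limRho_step c b σ e i n (by omega)]

noncomputable def limPhi (b : ℕ) (σ : Strat (limT c)) (i : ℕ) : Strat (T i) where
  f n := (limRho c b σ n i).f n
  h n := (limRho c b σ n i).h n

theorem limPhi_succ (b : ℕ) (σ : Strat (limT c)) (i : ℕ) :
    (c i).φ b (limPhi c b σ (i+1)) = limPhi c b σ i := by
  apply Strat.ext'
  intro n
  change _ = (limRho c b σ n i).f n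
  rw [limRho_step c b σ n i n (by omega)]
  refine (c i).loc _ _ _ _ fun m hm => ?_
  exact limRho_stab c b σ m n hm (i+1) m (by omega)

theorem limPhi_apply (b : ℕ) (σ : Strat (limT c)) (i n : ℕ) (h : n < K + 1 + i) (y : limP c n) :
    (limPhi c b σ i).f n (y.1 i) = (limMap c i).f (n+1) (σ.f n y) := by
  change (limRho c b σ n i).f n _ = _
  rw [← limRho_stab c b σ 0 n (Nat.zero_le _) i n (by omega)]
  exact limTau_apply c σ i n (by omega) y

theorem limRho_loc (b : ℕ) (σ τ : Strat (limT c)) (d : ℕ) : ∀ i n, (∀ m ≤ n, σ.f m = τ.f m) →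
    (limRho c b σ d i).f n = (limRho c b τ d i).f n := by
  induction d with
  | zero =>
    intro i n h
    funext q
    simp only [limRho, limTau, h n le_rfl]
  | succ d ih =>
    intro i n h
    exact (c i).loc _ _ _ _ fun m hm => ih (i+1) m fun l hl => h l (hl.trans hm)

noncomputable def limCov : Covering (K + 1) (limT c) (T 0) where
  π := limMap c 0
  φ b σ := limPhi c b σ 0
  loc b σ τ n h := limRho_loc c b σ τ n 0 n h
  bij n hn := by
    refine ⟨fun y z h => limP_inj c n 0 (by omega) h, fun q => ?_⟩
    exact limP_ext c n 0 (by omega) q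
  low b σ n hn y := limPhi_apply c b σ 0 n (by omega) y
  lift b hb σ x hx hc := by
    have step : ∀ i (x : {x : ∀ n, (T i).P n // (T i).IsBranch x ∧ Cons (limPhi c b σ i) b x}),
        ∃ x' : {x : ∀ n, (T (i+1)).P n // (T (i+1)).IsBranch x ∧ Cons (limPhi c b σ (i+1)) b x},
          ∀ n, (c i).π.f n (x'.1 n) = x.1 n := by
      rintro i ⟨x, hx, hc⟩
      rw [← limPhi_succ] at hc
      obtain ⟨x', h1, h2, h3⟩ := (c i).lift b hb _ x hx hc
      exact ⟨⟨x', h1, h2⟩, h3⟩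
    choose nxt hnxt using step
    let xs : ∀ i, {x : ∀ n, (T i).P n // (T i).IsBranch x ∧ Cons (limPhi c b σ i) b x} :=
      fun i => Nat.rec ⟨x, hx, hc⟩ (fun i p => nxt i p) i
    have hxs : ∀ i n, (c i).π.f n ((xs (i+1)).1 n) = (xs i).1 n := fun i n => hnxt i (xs i) n
    let y : ∀ n, limP c n := fun n => ⟨fun i => (xs i).1 n, fun i => hxs i n⟩
    refine ⟨y, fun n => ?_, fun n hn => ?_, fun n => rfl⟩
    · apply Subtype.ext
      funext i
      exact (xs i).2.1 n
    · apply limP_inj c (n+1) n (by omega)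
      change (xs n).1 (n+1) = _
      rw [(xs n).2.2 n hn]
      exact limPhi_apply c b σ n n (by omega) (y n)

end limit
end GTree

namespace GTree

section unravel
variable (T : GTree) (K : ℕ) (N : ∀ n, Set (T.P n))

def upc (S : ∀ n, Set (T.P n)) (n : ℕ) : Set (T.P n) := {p | ∃ m ≤ n, T.anc m n p ∈ S m}

/-- Positions from which the second player can force to hit `S`. -/
def W2 (S : ∀ n, Set (T.P n)) (n : ℕ) : Set (T.P n) := {p | T.Win 1 (T.upc S) n p}

/-- Positions from which the first player can force to hit `N` while avoiding `W2 S`. -/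
def W1 (S : ∀ n, Set (T.P n)) (n : ℕ) : Set (T.P n) :=
  {p | T.Win 0 (fun n => N n \ T.W2 S n) n p}

variable {T}

theorem W2_own {S : ∀ n, Set (T.P n)} {n : ℕ} (hn : n % 2 = 1) {q : T.P (n+1)}
    (h : T.r n q ∉ T.W2 S n) : q ∉ T.W2 S (n+1) := fun hq => h (Win.own hn hq)

theorem W2_opp {S : ∀ n, Set (T.P n)} {n : ℕ} (hn : n % 2 = 0) {p : T.P n}
    (h : p ∉ T.W2 S n) : ∃ q, T.r n q = p ∧ q ∉ T.W2 S (n+1) := by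
  by_contra! hc
  exact h (Win.opp (by omega) hc)

theorem W2_empty {n : ℕ} (p : T.P n) : p ∉ T.W2 (fun _ => ∅) n := by
  intro h
  obtain ⟨m, -, u, -, l, -, hu⟩ := Win.exists_desc h
  exact hu

theorem W2_mem {S : ∀ n, Set (T.P n)} {n : ℕ} {p : T.P n} (h : p ∈ S n) : p ∈ T.W2 S n :=
  Win.hit ⟨n, le_rfl, by rwa [anc_self]⟩

variable {N}

theorem W1_own {S : ∀ n, Set (T.P n)} {n : ℕ} (hn : n % 2 = 0) {q : T.P (n+1)}
    (h : T.r n q ∉ T.W1 N S n) : q ∉ T.W1 N S (n+1) := fun hq => h (Win.own hn hq)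

theorem W1_opp {S : ∀ n, Set (T.P n)} {n : ℕ} (hn : n % 2 = 1) {p : T.P n}
    (h : p ∉ T.W1 N S n) : ∃ q, T.r n q = p ∧ q ∉ T.W1 N S (n+1) := by
  by_contra! hc
  exact h (Win.opp (by omega) hc)

theorem W1_mem {S : ∀ n, Set (T.P n)} {n : ℕ} {p : T.P n} (h : p ∈ N n) (h' : p ∉ T.W2 S n) :
    p ∈ T.W1 N S n := Win.hit ⟨h, h'⟩

variable (T) (N)

def Valid (n : ℕ) (p : T.P n) (S : ∀ n, Set (T.P n)) (c : Option (Σ m, T.P m)) : Prop :=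
  (n ≤ K → S = fun _ => ∅) ∧ (n ≤ K+1 → c = none) ∧
  (K+1 ≤ n → T.anc (K+1) n p ∉ T.W2 S (K+1)) ∧
  (K+2 ≤ n → (c = none → ∀ m, K+1 ≤ m → m ≤ n →
      T.anc m n p ∉ T.W2 S m ∧ T.anc m n p ∉ T.W1 N S m) ∧
    (∀ m u, c = some ⟨m, u⟩ → K+2 ≤ m ∧ u ∈ N m ∧ u ∉ T.W2 S m ∧
      (n ≤ m → T.anc n m u = p) ∧ (m ≤ n → T.anc m n p = u)))

abbrev AuxP (n : ℕ) : Type :=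
  {t : T.P n × (∀ n, Set (T.P n)) × Option (Σ m, T.P m) // T.Valid K N n t.1 t.2.1 t.2.2}

variable {T N K}

theorem Valid.low {n : ℕ} (hn : n ≤ K) (p : T.P n) : T.Valid K N n p (fun _ => ∅) none :=
  ⟨fun _ => rfl, fun _ => rfl, fun h => by omega, fun h => by omega⟩

theorem Valid.first {p : T.P (K+1)} {S} (h : p ∉ T.W2 S (K+1)) : T.Valid K N (K+1) p S none :=
  ⟨fun h => by omega, fun _ => rfl, fun _ => by rwa [anc_self], fun h => by omega⟩

open Classical in
theorem Valid.res {n : ℕ} {q : T.P (n+1)} {S c} (h : T.Valid K N (n+1) q S c) :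
    T.Valid K N n (T.r n q) (if n ≤ K then fun _ => ∅ else S) (if n ≤ K+1 then none else c) := by
  obtain ⟨h1, h2, h3, h4⟩ := h
  by_cases hn : n ≤ K
  · rw [if_pos hn, if_pos (by omega)]
    exact Valid.low hn _
  rw [if_neg hn]
  by_cases hn' : n ≤ K + 1
  · obtain rfl : n = K + 1 := by omega
    rw [if_pos le_rfl]
    apply Valid.first
    have := h3 (by omega)
    rwa [anc_succ T le_rfl, anc_self] at this
  rw [if_neg hn']
  refine ⟨fun h => by omega, fun h => by omega, fun h => ?_, fun h => ⟨fun hc m hm hm' => ?_,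
    fun m u hc => ?_⟩⟩
  · rw [← anc_succ T (by omega)]; exact h3 (by omega)
  · rw [← anc_succ T (by omega)]; exact (h4 (by omega)).1 hc m hm (by omega)
  · obtain ⟨a1, a2, a3, a4, a5⟩ := (h4 (by omega)).2 m u hc
    refine ⟨a1, a2, a3, fun hnm => ?_, fun hmn => ?_⟩
    · by_cases hm : n = m
      · subst hm
        rw [← a5 (by omega), anc_succ T (by omega), anc_self, anc_self]
      · rw [← a4 (by omega), r_anc T (by omega)]
    · rw [← anc_succ T (by omega)]; exact a5 (by omega)

theorem Valid.exists_succ (hK : K % 2 = 0) (hN : ∀ n q, T.r n q ∈ N n → q ∈ N (n+1)) {n : ℕ}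
    {p : T.P n} {S c} (h : T.Valid K N n p S c) : ∃ q S' c', T.Valid K N (n+1) q S' c' ∧
      T.r n q = p ∧ (n ≤ K ∨ S' = S) ∧ (n ≤ K + 1 ∨ c' = c) := by
  obtain ⟨h1, h2, h3, h4⟩ := h
  obtain ⟨q0, hq0⟩ := T.surj n p
  by_cases hn : n + 1 ≤ K
  · exact ⟨q0, _, _, Valid.low hn q0, hq0, .inl (by omega), .inl (by omega)⟩
  by_cases hn' : n ≤ K
  · obtain rfl : n = K := by omega
    exact ⟨q0, fun _ => ∅, none, Valid.first (W2_empty _), hq0, .inl (by omega), .inl (by omega)⟩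
  by_cases hn2 : n ≤ K + 1
  · obtain rfl : n = K + 1 := by omega
    have hp : p ∉ T.W2 S (K+1) := by have := h3 le_rfl; rwa [anc_self] at this
    by_cases hw : p ∈ T.W1 N S (K+1)
    · have : ∃ m, K + 2 ≤ m ∧ ∃ u : T.P m, T.anc (K+1) m u = p ∧ u ∈ N m ∧ u ∉ T.W2 S m := by
        obtain ⟨m, hm, u, hu, huN, huW⟩ := Win.exists_desc hw
        by_cases hm' : m = K + 1
        · subst hm'
          rw [anc_self] at hu
          subst hu
          refine ⟨K+2, le_rfl, q0, ?_, hN _ _ (by rwa [hq0]), W2_own (by omega) (by rwa [hq0])⟩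
          rw [anc_succ T le_rfl, anc_self, hq0]
        · exact ⟨m, by omega, u, hu, huN, huW⟩
      obtain ⟨m, hm, u, hu, huN, huW⟩ := this
      have hr : T.r (K+1) (T.anc (K+1+1) m u) = p := by rw [r_anc T (by omega), hu]
      refine ⟨T.anc (K+1+1) m u, S, some ⟨m, u⟩, ⟨fun h => by omega, fun h => by omega,
        fun h => ?_, fun h => ⟨fun h => by simp at h, ?_⟩⟩, hr, .inr rfl, .inl (by omega)⟩
      · rw [anc_succ T le_rfl, anc_self, hr]; exact hp
      · rintro m' u' hh
        obtain ⟨rfl, hh⟩ := Sigma.mk.inj_iff.1 (Option.some.inj hh)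
        obtain rfl := eq_of_heq hh
        refine ⟨hm, huN, huW, fun _ => rfl, fun h => ?_⟩
        obtain rfl : m = K + 1 + 1 := by omega
        rw [anc_self, anc_self]
    · obtain ⟨q, hq, hqW⟩ := W1_opp (by omega) hw
      refine ⟨q, S, none, ⟨fun h => by omega, fun h => rfl, fun h => ?_, fun h => ⟨?_, ?_⟩⟩, hq,
        .inr rfl, .inl (by omega)⟩
      · rw [anc_succ T le_rfl, anc_self, hq]; exact hp
      · intro _ m hm hm'
        by_cases e : m = K + 1
        · subst e
          rw [anc_succ T le_rfl, anc_self, hq]; exact ⟨hp, hw⟩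
        · obtain rfl : m = K + 1 + 1 := by omega
          rw [anc_self]
          exact ⟨W2_own (by omega) (by rwa [hq]), hqW⟩
      · intro m u h; simp at h
  · have h3' := h3 (by omega)
    cases c with
    | none =>
      have hall := (h4 (by omega)).1 rfl
      have hp := hall n (by omega) le_rfl
      rw [anc_self] at hp
      have : ∃ q, T.r n q = p ∧ q ∉ T.W2 S (n+1) ∧ q ∉ T.W1 N S (n+1) := by
        rcases Nat.mod_two_eq_zero_or_one n with e | e
        · obtain ⟨q, hq, hqW⟩ := W2_opp e hp.1
          exact ⟨q, hq, hqW, W1_own e (by rw [hq]; exact hp.2)⟩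
        · obtain ⟨q, hq, hqW⟩ := W1_opp e hp.2
          exact ⟨q, hq, W2_own e (by rw [hq]; exact hp.1), hqW⟩
      obtain ⟨q, hq, hq1, hq2⟩ := this
      refine ⟨q, S, none, ⟨fun h => by omega, fun h => rfl, fun h => ?_, fun h => ⟨?_, ?_⟩⟩, hq,
        .inr rfl, .inr rfl⟩
      · rw [anc_succ T (by omega), hq]; exact h3'
      · intro _ m hm hm'
        by_cases e : m = n + 1
        · subst e; rw [anc_self]; exact ⟨hq1, hq2⟩
        · rw [anc_succ T (by omega), hq]; exact hall m hm (by omega)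
      · intro m u h; simp at h
    | some mu =>
      obtain ⟨m, u⟩ := mu
      obtain ⟨a1, a2, a3, a4, a5⟩ := (h4 (by omega)).2 m u rfl
      have : ∃ q, T.r n q = p ∧ (n + 1 ≤ m → T.anc (n+1) m u = q) ∧
          (m ≤ n + 1 → T.anc m (n+1) q = u) := by
        by_cases e : n + 1 ≤ m
        · refine ⟨T.anc (n+1) m u, ?_, fun _ => rfl, fun h => ?_⟩
          · rw [r_anc T e, a4 (by omega)]
          · obtain rfl : m = n + 1 := by omega
            rw [anc_self, anc_self]
        · refine ⟨q0, hq0, fun h => absurd h e, fun h => ?_⟩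
          rw [anc_succ T (by omega), hq0, a5 (by omega)]
      obtain ⟨q, hq, b1, b2⟩ := this
      refine ⟨q, S, some ⟨m, u⟩, ⟨fun h => by omega, fun h => by omega, fun h => ?_,
        fun h => ⟨fun h => by simp at h, ?_⟩⟩, hq, .inr rfl, .inr rfl⟩
      · rw [anc_succ T (by omega), hq]; exact h3'
      · rintro m' u' hh
        obtain ⟨rfl, hh⟩ := Sigma.mk.inj_iff.1 (Option.some.inj hh)
        obtain rfl := eq_of_heq hh
        exact ⟨a1, a2, a3, b1, b2⟩

variable (T N K)

open Classical in
@[reducible] noncomputable def auxT (hK : K % 2 = 0) (hN : ∀ n q, T.r n q ∈ N n → q ∈ N (n+1)) : GTree where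
  P := T.AuxP K N
  r n t := ⟨(T.r n t.1.1, if n ≤ K then fun _ => ∅ else t.1.2.1,
    if n ≤ K+1 then none else t.1.2.2), Valid.res t.2⟩
  surj n t := by
    obtain ⟨⟨p, S, c⟩, ht⟩ := t
    obtain ⟨q, S', c', hv, hq, hS, hc⟩ := Valid.exists_succ hK hN ht
    refine ⟨⟨(q, S', c'), hv⟩, Subtype.ext ?_⟩
    refine Prod.ext hq (Prod.ext ?_ ?_)
    · dsimp only
      split_ifs with h
      · exact (ht.1 h).symm
      · exact hS.resolve_left h
    · dsimp only
      split_ifs with h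
      · exact (ht.2.1 h).symm
      · exact hc.resolve_left h
  root := ⟨(T.root, fun _ => ∅, none), Valid.low (Nat.zero_le _) _⟩

end unravel
end GTree

namespace GTree

section unravelcov
variable {T : GTree} {K : ℕ} {N : ∀ n, Set (T.P n)}

open Classical in
noncomputable def play {n : ℕ} (s : T.AuxP K N n → T.AuxP K N (n+1)) (w : T.P n → T.P (n+1))
    (p : T.P n) (S : ∀ n, Set (T.P n)) (c : Option (Σ m, T.P m)) : T.P (n+1) :=
  if h : T.Valid K N n p S c then (s ⟨(p, S, c), h⟩).1.1 else w p

open Classical in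
noncomputable def hitc (K : ℕ) (D : ∀ n, Set (T.P n)) (n : ℕ) (p : T.P n) : Option (Σ m, T.P m) :=
  if h : ∃ m, K + 2 ≤ m ∧ m ≤ n ∧ T.anc m n p ∈ D m then some ⟨Nat.find h, T.anc (Nat.find h) n p⟩
  else none

theorem hitc_none {D : ∀ n, Set (T.P n)} {x : ∀ n, T.P n} (hx : T.IsBranch x) {n : ℕ}
    (h : ∀ m, K + 2 ≤ m → m ≤ n → x m ∉ D m) : hitc K D n (x n) = none := by
  unfold hitc
  rw [dif_neg]
  rintro ⟨m, h1, h2, h3⟩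
  rw [anc_branch T hx h2] at h3
  exact h m h1 h2 h3

theorem hitc_some {D : ∀ n, Set (T.P n)} {x : ∀ n, T.P n} (hx : T.IsBranch x) {m n : ℕ}
    (h : ∀ k, K + 2 ≤ k → k < m → x k ∉ D k) (hm : K + 2 ≤ m) (hmn : m ≤ n) (hD : x m ∈ D m) :
    hitc K D n (x n) = some ⟨m, x m⟩ := by
  classical
  unfold hitc
  have hex : ∃ m, K + 2 ≤ m ∧ m ≤ n ∧ T.anc m n (x n) ∈ D m :=
    ⟨m, hm, hmn, by rwa [anc_branch T hx hmn]⟩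
  rw [dif_pos hex]
  have : Nat.find hex = m := by
    rw [Nat.find_eq_iff]
    refine ⟨⟨hm, hmn, by rwa [anc_branch T hx hmn]⟩, ?_⟩
    rintro k hk ⟨h1, h2, h3⟩
    rw [anc_branch T hx h2] at h3
    exact h k h1 hk h3
  rw [this, anc_branch T hx hmn]

noncomputable def wst (b : ℕ) (A : ∀ n, Set (T.P n)) : Strat T := (exists_win_strat T b A).choose

theorem wst_spec (b : ℕ) (A : ∀ n, Set (T.P n)) (x : ∀ n, T.P n) (hx : T.IsBranch x) (n₀ : ℕ)
    (h : T.Win b A n₀ (x n₀)) (hf : ∀ n, n₀ ≤ n → n % 2 = b → x (n+1) = (wst b A).f n (x n)) :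
    ∃ n, n₀ ≤ n ∧ x n ∈ A n := (exists_win_strat T b A).choose_spec x hx n₀ h hf

def Sst (s1 : T.AuxP K N (K+1) → T.AuxP K N (K+1+1)) (v : T.P (K+1)) (m : ℕ) : Set (T.P m) :=
  {u | K + 2 ≤ m ∧ ∃ S', ∃ hv : T.Valid K N (K+1) v S' none,
    (s1 ⟨(v, S', none), hv⟩).1.2.2 = some ⟨m, u⟩}

open Classical in
noncomputable def selS (s1 : T.AuxP K N (K+1) → T.AuxP K N (K+1+1)) (v : T.P (K+1)) :
    Option (Σ m, T.P m) → ∀ n, Set (T.P n)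
  | none => Sst s1 v
  | some mu => if h : ∃ S', ∃ hv : T.Valid K N (K+1) v S' none,
      (s1 ⟨(v, S', none), hv⟩).1.2.2 = some mu then h.choose else fun _ => ∅

theorem selS_spec {s1 : T.AuxP K N (K+1) → T.AuxP K N (K+1+1)} {v : T.P (K+1)} {m : ℕ} {u : T.P m}
    (h : u ∈ Sst s1 v m) : ∃ hv : T.Valid K N (K+1) v (selS s1 v (some ⟨m, u⟩)) none,
      (s1 ⟨(v, selS s1 v (some ⟨m, u⟩), none), hv⟩).1.2.2 = some ⟨m, u⟩ := by
  have h' := h.2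
  have e : selS s1 v (some ⟨m, u⟩) = h'.choose := by
    simp only [selS]; exact dif_pos h'
  rw [e]
  exact h'.choose_spec

variable {hK : K % 2 = 0} {hN : ∀ n q, T.r n q ∈ N n → q ∈ N (n+1)}

theorem auxT_r_fst (n : ℕ) (t : (T.auxT K N hK hN).P (n+1)) :
    ((T.auxT K N hK hN).r n t).1.1 = T.r n t.1.1 := rfl

theorem strat_fst (σ : Strat (T.auxT K N hK hN)) (n : ℕ) (t : T.AuxP K N n) :
    T.r n (σ.f n t).1.1 = t.1.1 := congrArg (fun t => t.1.1) (σ.h n t)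

theorem strat_S (σ : Strat (T.auxT K N hK hN)) (n : ℕ) (hn : K < n) (t : T.AuxP K N n) :
    (σ.f n t).1.2.1 = t.1.2.1 := by
  have := congrArg (fun t => t.1.2.1) (σ.h n t)
  simp only [auxT] at this
  rwa [if_neg (by omega)] at this

theorem strat_c (σ : Strat (T.auxT K N hK hN)) (n : ℕ) (hn : K + 1 < n) (t : T.AuxP K N n) :
    (σ.f n t).1.2.2 = t.1.2.2 := by
  have := congrArg (fun t => t.1.2.2) (σ.h n t)
  simp only [auxT] at this
  rwa [if_neg (by omega)] at this

theorem play_r (σ : Strat (T.auxT K N hK hN)) (w : Strat T) (n : ℕ) (p : T.P n) (S c) :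
    T.r n (play (K := K) (N := N) (σ.f n) (w.f n) p S c) = p := by
  unfold play
  split_ifs with h
  · exact strat_fst σ n _
  · exact w.h n p

variable (T K N)

/-- The `S` chosen by player I. -/
noncomputable def SI {T : GTree} {K : ℕ} {N : ∀ n, Set (T.P n)} (s : T.AuxP K N K → T.AuxP K N (K+1)) (p : T.P K) : ∀ n, Set (T.P n) :=
  (s ⟨(p, fun _ => ∅, none), Valid.low le_rfl _⟩).1.2.1

def NW {T : GTree} (N : ∀ n, Set (T.P n)) (S : ∀ n, Set (T.P n)) (n : ℕ) : Set (T.P n) := N n \ T.W2 S n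

noncomputable def phi0 (σ : Strat (T.auxT K N hK hN)) : Strat T where
  f n p := if h : n ≤ K then ((σ.f n : T.AuxP K N n → _) ⟨(p, fun _ => ∅, none), Valid.low h _⟩).1.1
    else play (K := K) (N := N) (σ.f n) ((wst 0 (NW N (SI (σ.f K) (T.anc K n p)))).f n) p
      (SI (σ.f K) (T.anc K n p)) (hitc K (NW N (SI (σ.f K) (T.anc K n p))) n p)
  h n p := by
    split_ifs with h
    · exact strat_fst σ n _
    · exact play_r σ _ n p _ _

noncomputable def phi1 (σ : Strat (T.auxT K N hK hN)) : Strat T where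
  f n p := if h : n ≤ K then ((σ.f n : T.AuxP K N n → _) ⟨(p, fun _ => ∅, none), Valid.low h _⟩).1.1
    else play (K := K) (N := N) (σ.f n)
      ((wst 1 (T.upc (Sst (σ.f (K+1)) (T.anc (K+1) n p)))).f n) p
      (selS (σ.f (K+1)) (T.anc (K+1) n p) (hitc K (Sst (σ.f (K+1)) (T.anc (K+1) n p)) n p))
      (hitc K (Sst (σ.f (K+1)) (T.anc (K+1) n p)) n p)
  h n p := by
    split_ifs with h
    · exact strat_fst σ n _
    · exact play_r σ _ n p _ _

variable {T K N}

open Classical in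
noncomputable def auxBr (x : ∀ n, T.P n) (S : ∀ n, Set (T.P n)) (c)
    (h1 : x (K+1) ∉ T.W2 S (K+1)) (h2 : ∀ n, K + 2 ≤ n → T.Valid K N n (x n) S c) (n : ℕ) :
    T.AuxP K N n :=
  ⟨(x n, if n ≤ K then fun _ => ∅ else S, if n ≤ K + 1 then none else c), by
    clear hN hK
    by_cases hn : n ≤ K
    · simp only [if_pos hn, if_pos (show n ≤ K + 1 by omega)]
      exact Valid.low hn _
    simp only [if_neg hn]
    by_cases hn' : n ≤ K + 1
    · obtain rfl : n = K + 1 := by omega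
      simp only [if_pos le_rfl]
      exact Valid.first h1
    · simp only [if_neg hn']
      exact h2 n (by omega)⟩

theorem auxBr_branch {x : ∀ n, T.P n} (hx : T.IsBranch x) (S : ∀ n, Set (T.P n)) (c)
    (h1 : x (K+1) ∉ T.W2 S (K+1)) (h2 : ∀ n, K + 2 ≤ n → T.Valid K N n (x n) S c) :
    (T.auxT K N hK hN).IsBranch (auxBr x S c h1 h2) := by
  intro n
  apply Subtype.ext
  refine Prod.ext (hx n) (Prod.ext ?_ ?_)
  · simp only [auxBr, auxT]
    by_cases h : n ≤ K
    · simp only [if_pos h]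
    · simp only [if_neg h, if_neg (show ¬ n + 1 ≤ K by omega)]
  · simp only [auxBr, auxT]
    by_cases h : n ≤ K + 1
    · simp only [if_pos h]
    · simp only [if_neg h, if_neg (show ¬ n + 1 ≤ K + 1 by omega)]

theorem auxBr_val_low {x : ∀ n, T.P n} {S : ∀ n, Set (T.P n)} {c}
    {h1 : x (K+1) ∉ T.W2 S (K+1)} {h2 : ∀ n, K + 2 ≤ n → T.Valid K N n (x n) S c} {n : ℕ}
    (h : n ≤ K) : auxBr x S c h1 h2 n = ⟨(x n, fun _ => ∅, none), Valid.low h _⟩ := by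
  apply Subtype.ext
  simp only [auxBr, if_pos h, if_pos (show n ≤ K + 1 by omega)]

theorem auxBr_val_mid {x : ∀ n, T.P n} {S : ∀ n, Set (T.P n)} {c}
    {h1 : x (K+1) ∉ T.W2 S (K+1)} {h2 : ∀ n, K + 2 ≤ n → T.Valid K N n (x n) S c} :
    auxBr x S c h1 h2 (K+1) = ⟨(x (K+1), S, none), Valid.first h1⟩ := by
  apply Subtype.ext
  simp only [auxBr, if_neg (show ¬ K + 1 ≤ K by omega), if_pos le_rfl]

theorem auxBr_val_high {x : ∀ n, T.P n} {S : ∀ n, Set (T.P n)} {c}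
    {h1 : x (K+1) ∉ T.W2 S (K+1)} {h2 : ∀ n, K + 2 ≤ n → T.Valid K N n (x n) S c} {n : ℕ}
    (h : K + 2 ≤ n) : auxBr x S c h1 h2 n = ⟨(x n, S, c), h2 n h⟩ := by
  apply Subtype.ext
  simp only [auxBr, if_neg (show ¬ n ≤ K by omega), if_neg (show ¬ n ≤ K + 1 by omega)]

/-- Consistency of the lifted branch. -/
theorem auxBr_step {x : ∀ n, T.P n} {S : ∀ n, Set (T.P n)} {c}
    {h1 : x (K+1) ∉ T.W2 S (K+1)} {h2 : ∀ n, K + 2 ≤ n → T.Valid K N n (x n) S c}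
    (σ : Strat (T.auxT K N hK hN)) (n : ℕ)
    (hp : x (n+1) = (σ.f n (auxBr x S c h1 h2 n)).1.1)
    (hS : n = K → S = (σ.f n (auxBr x S c h1 h2 n)).1.2.1)
    (hc : n = K + 1 → c = (σ.f n (auxBr x S c h1 h2 n)).1.2.2) :
    auxBr x S c h1 h2 (n+1) = σ.f n (auxBr x S c h1 h2 n) := by
  apply Subtype.ext
  refine Prod.ext hp (Prod.ext ?_ ?_)
  · by_cases h : n + 1 ≤ K
    · rw [auxBr_val_low h]
      exact ((σ.f n (auxBr x S c h1 h2 n)).2.1 h).symm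
    by_cases h' : n = K
    · rw [← hS h']; simp only [auxBr, if_neg h]
    · rw [strat_S σ n (by omega)]
      simp only [auxBr, if_neg h, if_neg (show ¬ n ≤ K by omega)]
  · by_cases h : n + 1 ≤ K + 1
    · simp only [auxBr, if_pos h]
      exact ((σ.f n (auxBr x S c h1 h2 n)).2.2.1 h).symm
    by_cases h' : n = K + 1
    · rw [← hc h']; simp only [auxBr, if_neg h]
    · rw [strat_c σ n (by omega)]
      simp only [auxBr, if_neg h, if_neg (show ¬ n ≤ K + 1 by omega)]

theorem valid_some {x : ∀ n, T.P n} (hx : T.IsBranch x) {S : ∀ n, Set (T.P n)} {m : ℕ}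
    (h1 : x (K+1) ∉ T.W2 S (K+1)) (hm : K + 2 ≤ m) (hN : x m ∈ N m) (hW : x m ∉ T.W2 S m)
    (n : ℕ) (hn : K + 2 ≤ n) : T.Valid K N n (x n) S (some ⟨m, x m⟩) := by
  refine ⟨fun h => by omega, fun h => by omega, fun h => by rwa [anc_branch T hx h],
    fun h => ⟨fun h => by simp at h, ?_⟩⟩
  rintro m' u' hh
  obtain ⟨rfl, hh⟩ := Sigma.mk.inj_iff.1 (Option.some.inj hh)
  obtain rfl := eq_of_heq hh
  exact ⟨hm, hN, hW, fun h => anc_branch T hx h, fun h => anc_branch T hx h⟩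

theorem valid_none {x : ∀ n, T.P n} (hx : T.IsBranch x) {S : ∀ n, Set (T.P n)} 
    (n : ℕ) (hn : K + 2 ≤ n) (h : ∀ m, K + 1 ≤ m → m ≤ n → x m ∉ T.W2 S m ∧ x m ∉ T.W1 N S m) :
    T.Valid K N n (x n) S none := by
  refine ⟨fun h => by omega, fun h => rfl, fun h' => ?_,
    fun h' => ⟨fun _ m h1 h2 => ?_, fun m u h => by simp at h⟩⟩
  · rw [anc_branch T hx h']; exact (h _ le_rfl (by omega)).1
  · rw [anc_branch T hx h2]; exact h m h1 h2

/-- moves before the target are forced -/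
theorem forced (σ : Strat (T.auxT K N hK hN)) {x : ∀ n, T.P n} (hx : T.IsBranch x) {n m : ℕ}
    (hn : K + 1 ≤ n) (hnm : n + 1 ≤ m) (t : T.AuxP K N n) (hc : (σ.f n t).1.2.2 = some ⟨m, x m⟩) :
    (σ.f n t).1.1 = x (n+1) := by
  obtain ⟨a1, a2, a3, a4, a5⟩ := ((σ.f n t).2.2.2.2 (by omega)).2 m (x m) hc
  rw [← a4 hnm, anc_branch T hx hnm]

theorem play_valid {n : ℕ} {s : T.AuxP K N n → T.AuxP K N (n+1)} {w : T.P n → T.P (n+1)}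
    {p : T.P n} {S c} (h : T.Valid K N n p S c) : play s w p S c = (s ⟨(p, S, c), h⟩).1.1 :=
  dif_pos h

theorem play_invalid {n : ℕ} {s : T.AuxP K N n → T.AuxP K N (n+1)} {w : T.P n → T.P (n+1)}
    {p : T.P n} {S c} (h : ¬ T.Valid K N n p S c) : play s w p S c = w p :=
  dif_neg h

theorem not_valid_none {x : ∀ n, T.P n} (hx : T.IsBranch x) {S : ∀ n, Set (T.P n)} 
    {m n : ℕ} (hn : K + 2 ≤ n) (h1 : K + 1 ≤ m) (h2 : m ≤ n)
    (h : x m ∈ T.W2 S m ∨ x m ∈ T.W1 N S m) :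
    ¬ T.Valid K N n (x n) S none := by
  rintro ⟨-, -, -, h4⟩
  have := (h4 hn).1 rfl m h1 h2
  rw [anc_branch T hx h2] at this
  tauto

theorem lift0 (σ : Strat (T.auxT K N hK hN)) {x : ∀ n, T.P n} (hx : T.IsBranch x)
    (hc : Cons (phi0 T K N σ) 0 x) : ∃ x', (T.auxT K N hK hN).IsBranch x' ∧ Cons σ 0 x' ∧
      ∀ n, (x' n).1.1 = x n := by
  classical
  set S := SI (σ.f K) (x K) with hS
  have hlow : ∀ n, (h : n ≤ K) → n % 2 = 0 →
      x (n+1) = ((σ.f n : T.AuxP K N n → _) ⟨(x n, fun _ => ∅, none), Valid.low h _⟩).1.1 := by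
    intro n h hn
    rw [hc n hn]; simp only [phi0, dif_pos h]
  have hhigh : ∀ n, K + 2 ≤ n → n % 2 = 0 → x (n+1) = play (K := K) (N := N) (σ.f n)
      ((wst 0 (NW N S)).f n) (x n) S (hitc K (NW N S) n (x n)) := by
    intro n h hn
    rw [hc n hn]; simp only [phi0, dif_neg (show ¬ n ≤ K by omega)]
    rw [anc_branch T hx (show K ≤ n by omega)]
  have h1 : x (K+1) ∉ T.W2 S (K+1) := by
    have := ((σ.f K : T.AuxP K N K → _) ⟨(x K, fun _ => ∅, none), Valid.low le_rfl _⟩).2.2.2.1 le_rfl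
    rw [anc_self, ← hlow K le_rfl hK] at this
    exact this
  -- reduce to finding `c`
  suffices ∃ c, ∃ h2 : ∀ n, K + 2 ≤ n → T.Valid K N n (x n) S c,
      ∀ n, (h : K + 2 ≤ n) → n % 2 = 0 →
        x (n+1) = ((σ.f n : T.AuxP K N n → _) ⟨(x n, S, c), h2 n h⟩).1.1 by
    obtain ⟨c, h2, h3⟩ := this
    refine ⟨auxBr x S c h1 h2, auxBr_branch hx S c h1 h2, fun n hn => ?_, fun n => rfl⟩
    refine auxBr_step σ n ?_ ?_ ?_
    · by_cases h : n ≤ K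
      · rw [auxBr_val_low h]; exact hlow n h hn
      · rw [auxBr_val_high (by omega)]; exact h3 n (by omega) hn
    · rintro rfl
      rw [auxBr_val_low le_rfl]; rfl
    · rintro rfl; omega
  by_cases hh : ∃ m, K + 2 ≤ m ∧ x m ∈ NW N S m
  · have hm := Nat.find_spec hh
    have hmin : ∀ k, K + 2 ≤ k → k < Nat.find hh → x k ∉ NW N S k := fun k h1 h2 h3 =>
      Nat.find_min hh h2 ⟨h1, h3⟩
    set m := Nat.find hh
    refine ⟨some ⟨m, x m⟩, valid_some hx h1 hm.1 hm.2.1 hm.2.2, fun n h hn => ?_⟩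
    by_cases hnm : n + 1 ≤ m
    · refine (forced σ hx (by omega) hnm _ ?_).symm
      rw [strat_c σ n (by omega)]
    · have := hhigh n h hn
      rw [hitc_some hx hmin hm.1 (by omega) hm.2, play_valid (valid_some hx h1 hm.1 hm.2.1 hm.2.2 n h)] at this
      exact this
  · have hno : ∀ m, K + 2 ≤ m → x m ∉ NW N S m := fun m h1 h2 => hh ⟨m, h1, h2⟩
    have hhigh' : ∀ n, K + 2 ≤ n → n % 2 = 0 → x (n+1) = play (K := K) (N := N) (σ.f n)
      ((wst 0 (NW N S)).f n) (x n) S none := by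
      intro n h hn
      rw [hhigh n h hn, hitc_none hx (fun m h1 h2 => hno m h1)]
    have hW1 : ∀ m, K + 1 ≤ m → x m ∉ T.W1 N S m := by
      intro m hm hw
      obtain ⟨n, hn, hnA⟩ := wst_spec 0 (NW N S) x hx m hw (fun n hn hn0 => by
        rw [hhigh' n (by omega) hn0, play_invalid (not_valid_none hx (by omega) hm hn (.inr hw))])
      by_cases e : n = K + 1
      · subst e
        refine hno (K+1+1) le_rfl ⟨hN _ _ ?_, W2_own (by omega) ?_⟩
        · rw [hx]; exact hnA.1
        · rw [hx]; exact hnA.2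
      · exact hno n (by omega) hnA
    have hW2 : ∀ m, K + 1 ≤ m → ∀ k, K + 1 ≤ k → k ≤ m → x k ∉ T.W2 S k := by
      intro m hm
      induction m, hm using Nat.le_induction with
      | base =>
        intro k hk hk'
        obtain rfl : k = K + 1 := by omega
        exact h1
      | succ n hn ih =>
        intro k hk hk'
        by_cases e : k ≤ n
        · exact ih k hk e
        obtain rfl : k = n + 1 := by omega
        rcases Nat.mod_two_eq_zero_or_one n with e | e
        · have hv := valid_none hx (N := N) n (by omega) (fun m a b => ⟨ih m a b, hW1 m a⟩)
          have h5 := hhigh' n (by omega) e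
          rw [play_valid hv] at h5
          have h6 := ((σ.f n : T.AuxP K N n → _) ⟨(x n, S, none), hv⟩).2.2.2.2 (by omega)
          have h7 := (h6.1 (strat_c σ n (by omega) _) (n+1) (by omega) le_rfl).1
          rw [anc_self, ← h5, strat_S σ n (by omega)] at h7
          exact h7
        · exact W2_own e (by rw [hx]; exact ih n hn le_rfl)
    have hv : ∀ n, K + 2 ≤ n → T.Valid K N n (x n) S none := fun n hn =>
      valid_none hx n hn fun m a b => ⟨hW2 m a m a le_rfl, hW1 m a⟩
    refine ⟨none, hv, fun n h hn => ?_⟩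
    have := hhigh' n h hn
    rwa [play_valid (hv n h)] at this

theorem lift1 (σ : Strat (T.auxT K N hK hN)) {x : ∀ n, T.P n} (hx : T.IsBranch x)
    (hc : Cons (phi1 T K N σ) 1 x) : ∃ x', (T.auxT K N hK hN).IsBranch x' ∧ Cons σ 1 x' ∧
      ∀ n, (x' n).1.1 = x n := by
  classical
  set D := Sst (σ.f (K+1)) (x (K+1)) with hD
  have hlow : ∀ n, (h : n ≤ K) → n % 2 = 1 →
      x (n+1) = ((σ.f n : T.AuxP K N n → _) ⟨(x n, fun _ => ∅, none), Valid.low h _⟩).1.1 := by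
    intro n h hn
    rw [hc n hn]; simp only [phi1, dif_pos h]
  have hhigh : ∀ n, K + 1 ≤ n → n % 2 = 1 → x (n+1) = play (K := K) (N := N) (σ.f n)
      ((wst 1 (T.upc D)).f n) (x n) (selS (σ.f (K+1)) (x (K+1)) (hitc K D n (x n)))
        (hitc K D n (x n)) := by
    intro n h hn
    rw [hc n hn]; simp only [phi1, dif_neg (show ¬ n ≤ K by omega)]
    rw [anc_branch T hx (show K + 1 ≤ n by omega)]
  suffices ∃ S c, ∃ h1 : x (K+1) ∉ T.W2 S (K+1), ∃ h2 : ∀ n, K + 2 ≤ n → T.Valid K N n (x n) S c,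
      ((σ.f (K+1) : T.AuxP K N (K+1) → _) ⟨(x (K+1), S, none), Valid.first h1⟩).1.2.2 = c ∧
      x (K+1+1) = ((σ.f (K+1) : T.AuxP K N (K+1) → _) ⟨(x (K+1), S, none), Valid.first h1⟩).1.1 ∧
      ∀ n, (h : K + 2 ≤ n) → n % 2 = 1 →
        x (n+1) = ((σ.f n : T.AuxP K N n → _) ⟨(x n, S, c), h2 n h⟩).1.1 by
    obtain ⟨S, c, h1, h2, h3, h4, h5⟩ := this
    refine ⟨auxBr x S c h1 h2, auxBr_branch hx S c h1 h2, fun n hn => ?_, fun n => rfl⟩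
    refine auxBr_step σ n ?_ ?_ ?_
    · by_cases h : n ≤ K
      · rw [auxBr_val_low h]; exact hlow n h hn
      by_cases h' : n = K + 1
      · subst h'
        rw [auxBr_val_mid]; exact h4
      · rw [auxBr_val_high (by omega)]; exact h5 n (by omega) hn
    · rintro rfl; omega
    · rintro rfl
      rw [auxBr_val_mid]; exact h3.symm
  by_cases hh : ∃ m, K + 2 ≤ m ∧ x m ∈ D m
  · have hm := Nat.find_spec hh
    have hmin : ∀ k, K + 2 ≤ k → k < Nat.find hh → x k ∉ D k := fun k h1 h2 h3 =>
      Nat.find_min hh h2 ⟨h1, h3⟩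
    set m := Nat.find hh
    obtain ⟨hv, hv'⟩ := selS_spec hm.2
    set S := selS (σ.f (K+1)) (x (K+1)) (some ⟨m, x m⟩) with hS
    have h1 : x (K+1) ∉ T.W2 S (K+1) := by have := hv.2.2.1 le_rfl; rwa [anc_self] at this
    obtain ⟨a1, a2, a3, a4, a5⟩ := ((σ.f (K+1) ⟨(x (K+1), S, none), hv⟩).2.2.2.2 le_rfl).2 m (x m) hv'
    rw [strat_S σ (K+1) (by omega)] at a3
    have h2 := valid_some hx h1 hm.1 a2 a3
    refine ⟨S, some ⟨m, x m⟩, h1, h2, hv', ?_, fun n h hn => ?_⟩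
    · exact (forced σ hx le_rfl hm.1 _ hv').symm
    by_cases hnm : n + 1 ≤ m
    · refine (forced σ hx (by omega) hnm _ ?_).symm
      rw [strat_c σ n (by omega)]
    · have := hhigh n (by omega) hn
      rw [hitc_some hx hmin hm.1 (by omega) hm.2, play_valid (h2 n h)] at this
      exact this
  · have hno : ∀ m, K + 2 ≤ m → x m ∉ D m := fun m h1 h2 => hh ⟨m, h1, h2⟩
    have hno' : ∀ m, x m ∉ T.upc D m := by
      rintro m ⟨l, hl, h⟩
      rw [anc_branch T hx hl] at h
      exact hno l h.1 h
    have hhigh' : ∀ n, K + 1 ≤ n → n % 2 = 1 → x (n+1) = play (K := K) (N := N) (σ.f n)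
      ((wst 1 (T.upc D)).f n) (x n) D none := by
      intro n h hn
      rw [hhigh n h hn, hitc_none hx (fun m h1 h2 => hno m h1)]; rfl
    have hW2 : ∀ m, K + 1 ≤ m → x m ∉ T.W2 D m := by
      intro m hm hw
      obtain ⟨n, hn, hnA⟩ := wst_spec 1 (T.upc D) x hx m hw (fun n hn hn0 => by
        rw [hhigh' n (by omega) hn0, play_invalid]
        by_cases e : n = K + 1
        · obtain rfl : m = K + 1 := by omega
          subst e
          rintro ⟨-, -, h3, -⟩
          rw [anc_self] at h3
          exact h3 le_rfl hw
        · exact not_valid_none hx (by omega) hm hn (.inl hw))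
      exact hno' n hnA
    have h1 := hW2 (K+1) le_rfl
    have h4 := hhigh' (K+1) le_rfl (by omega)
    rw [play_valid (Valid.first h1)] at h4
    set t := (σ.f (K+1) : T.AuxP K N (K+1) → _) ⟨(x (K+1), D, none), Valid.first h1⟩ with ht
    have htS : t.1.2.1 = D := strat_S σ (K+1) (by omega) _
    have h3 : t.1.2.2 = none := by
      rcases hcc : t.1.2.2 with _ | ⟨m, u⟩
      · rfl
      exfalso
      obtain ⟨a1, a2, a3, a4, a5⟩ := (t.2.2.2.2 le_rfl).2 m u hcc
      rw [htS] at a3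
      exact a3 (W2_mem ⟨a1, D, Valid.first h1, hcc⟩)
    have hW1 : ∀ m, K + 2 ≤ m → ∀ k, K + 1 ≤ k → k ≤ m → x k ∉ T.W1 N D k := by
      intro m hm
      induction m, hm using Nat.le_induction with
      | base =>
        intro k hk hk'
        have := ((t.2.2.2.2 le_rfl).1 h3 k hk hk').2
        rw [htS, ← h4] at this
        rwa [anc_branch T hx hk'] at this
      | succ n hn ih =>
        intro k hk hk'
        by_cases e : k ≤ n
        · exact ih k hk e
        obtain rfl : k = n + 1 := by omega
        rcases Nat.mod_two_eq_zero_or_one n with e | e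
        · exact W1_own e (by rw [hx]; exact ih n (by omega) le_rfl)
        · have hv := valid_none hx (N := N) n (by omega) (fun m a b => ⟨hW2 m a, ih m a b⟩)
          have h5 := hhigh' n (by omega) e
          rw [play_valid hv] at h5
          have h6 := ((σ.f n : T.AuxP K N n → _) ⟨(x n, D, none), hv⟩).2.2.2.2 (by omega)
          have h7 := (h6.1 (strat_c σ n (by omega) _) (n+1) (by omega) le_rfl).2
          rw [anc_self, ← h5, strat_S σ n (by omega)] at h7
          exact h7
    have hv : ∀ n, K + 2 ≤ n → T.Valid K N n (x n) D none := fun n hn =>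
      valid_none hx n hn fun m a b => ⟨hW2 m a, hW1 n hn m a b⟩
    refine ⟨D, none, h1, hv, h3, h4, fun n h hn => ?_⟩
    have := hhigh' n (by omega) hn
    rwa [play_valid (hv n h)] at this

theorem aux_low {n : ℕ} (h : n ≤ K) (t : T.AuxP K N n) :
    t = ⟨(t.1.1, fun _ => ∅, none), Valid.low h _⟩ :=
  Subtype.ext (Prod.ext rfl (Prod.ext (t.2.1 h) (t.2.2.1 (by omega))))

variable (T K N hK hN)
noncomputable def auxCov : Covering K (T.auxT K N hK hN) T where
  π := ⟨fun n t => t.1.1, fun n t => rfl⟩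
  φ b σ := if b = 0 then phi0 T K N σ else phi1 T K N σ
  loc b σ τ n h := by
    funext p
    split_ifs with hb
    · simp only [phi0]
      split_ifs with hn
      · rw [h n le_rfl]
      · rw [h n le_rfl, h K (by omega)]
    · simp only [phi1]
      split_ifs with hn
      · rw [h n le_rfl]
      · rw [h n le_rfl, h (K+1) (by omega)]
  lift b hb σ x hx hc := by
    by_cases h : b = 0
    · subst h
      exact lift0 σ hx hc
    · obtain rfl : b = 1 := by omega
      exact lift1 σ hx hc
  bij n hn := by
    constructor
    · intro s t hst
      rw [aux_low hn s, aux_low hn t]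
      simp only at hst
      simp only [hst]
    · intro p
      exact ⟨⟨(p, fun _ => ∅, none), Valid.low hn _⟩, rfl⟩
  low b σ n hn p := by
    have hp := aux_low hn.le p
    split_ifs with hb
    · simp only [phi0, dif_pos hn.le]
      rw [← hp]
    · simp only [phi1, dif_pos hn.le]
      rw [← hp]

theorem auxCov_unravel {x : ∀ n, (T.auxT K N hK hN).P n} (hx : (T.auxT K N hK hN).IsBranch x) :
    (∀ n, ((auxCov T K N hK hN).π.f n (x n)) ∉ N n) ↔ (x (K+2)).1.2.2 = none := by
  have hb := (auxCov T K N hK hN).π.branch hx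
  have hr : ∀ n, K + 2 ≤ n → (x n).1.2.2 = (x (K+2)).1.2.2 := by
    intro n hn
    induction n, hn using Nat.le_induction with
    | base => rfl
    | succ n hn ih =>
      rw [← ih]
      have := congrArg (fun t => t.1.2.2) (hx n)
      simp only [auxT] at this
      rw [if_neg (by omega)] at this
      exact this
  have hup : ∀ n, ∀ m, n ≤ m → (x n).1.1 ∈ N n → (x m).1.1 ∈ N m := by
    intro n m hm hn
    induction m, hm using Nat.le_induction with
    | base => exact hn
    | succ m hm ih => exact hN _ _ (by rw [show T.r m (x (m+1)).1.1 = (x m).1.1 from hb m]; exact ih)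
  constructor
  · intro h
    rcases hcc : (x (K+2)).1.2.2 with _ | ⟨m, u⟩
    · rfl
    exfalso
    obtain ⟨a1, a2, a3, a4, a5⟩ := ((x (K+2)).2.2.2.2 le_rfl).2 m u hcc
    have := (((x m).2.2.2.2 a1).2 m u ((hr m a1).trans hcc)).2.2.2.1 le_rfl
    rw [anc_self] at this
    subst this
    exact h m a2
  · intro h n hn
    have hm : K + 2 ≤ n + (K+2) := by omega
    have h1 := hup n (n + (K+2)) (by omega) hn
    have h2 := ((x (n + (K+2))).2.2.2.2 hm).1 ((hr _ hm).trans h) _ (by omega) le_rfl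
    rw [anc_self] at h2
    exact h2.2 (W1_mem h1 h2.1)

end unravelcov
end GTree

namespace GTree

def TMap.id (T : GTree) : TMap T T := ⟨fun _ p => p, fun _ _ => rfl⟩

def UU (T : GTree) (X : Set (∀ n, T.P n)) : Prop :=
  ∀ (T' : GTree) (f : TMap T' T) (K : ℕ), ∃ (T'' : GTree) (c : Covering K T'' T') (L : ℕ)
    (C : Set (T''.P L)), ∀ x, T''.IsBranch x →
      ((fun n => f.f n (c.π.f n (x n))) ∈ X ↔ x L ∈ C)

theorem UU.compl {T : GTree} {X : Set (∀ n, T.P n)} (h : UU T X) : UU T Xᶜ := by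
  intro T' f K
  obtain ⟨T'', c, L, C, h⟩ := h T' f K
  exact ⟨T'', c, L, Cᶜ, fun x hx => not_congr (h x hx)⟩

theorem UU.level {T : GTree} {X : Set (∀ n, T.P n)} (L : ℕ) (C : Set (T.P L))
    (h : ∀ x, x ∈ X ↔ x L ∈ C) : UU T X := by
  intro T' f K
  exact ⟨T', Covering.id K T', L, {p | f.f L p ∈ C}, fun x hx => h _⟩

theorem unravel_open (T : GTree) (K : ℕ) (N : ∀ n, Set (T.P n))
    (hN : ∀ n q, T.r n q ∈ N n → q ∈ N (n+1)) : ∃ (T'' : GTree) (c : Covering K T'' T) (L : ℕ)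
    (C : Set (T''.P L)), ∀ x, T''.IsBranch x → ((∃ n, c.π.f n (x n) ∈ N n) ↔ x L ∈ C) := by
  have hK : (2 * K) % 2 = 0 := by omega
  refine ⟨T.auxT (2*K) N hK hN, (auxCov T (2*K) N hK hN).mono (by omega), 2*K+2,
    {t | t.1.2.2 ≠ none}, fun x hx => ?_⟩
  have := auxCov_unravel T (2*K) N hK hN hx
  have h2 := not_congr this
  push Not at h2
  exact h2

noncomputable section
section union
variable {T T' : GTree} (f : TMap T' T) (K : ℕ)
  (TT : ℕ → ∀ (S : GTree), TMap S T → ℕ → GTree)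
  (cc : ∀ i S f K, Covering K (TT i S f K) S)

def useq : ℕ → (S : GTree) × TMap S T'
  | 0 => ⟨T', TMap.id T'⟩
  | i+1 => ⟨TT i (useq i).1 (f.comp (useq i).2) (K+1+i),
      (useq i).2.comp (cc i (useq i).1 (f.comp (useq i).2) (K+1+i)).π⟩

def ucov (i : ℕ) : Covering (K+1+i) (useq f K TT cc (i+1)).1 (useq f K TT cc i).1 :=
  cc i (useq f K TT cc i).1 (f.comp (useq f K TT cc i).2) (K+1+i)

theorem useq_apply (n : ℕ) (y : limP (ucov f K TT cc) n) (i : ℕ) :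
    (useq f K TT cc i).2.f n (y.1 i) = y.1 0 := by
  induction i with
  | zero => rfl
  | succ i ih =>
    rw [← ih, ← y.2 i]
    rfl

end union
end

theorem UU.iUnion {T : GTree} {X : ℕ → Set (∀ n, T.P n)} (h : ∀ i, UU T (X i)) :
    UU T (⋃ i, X i) := by
  intro T' f K
  unfold UU at h
  choose TT cc LL CC hh using h
  let U : ℕ → GTree := fun i => (useq f K TT cc i).1
  let c : ∀ i, Covering (K+1+i) (U (i+1)) (U i) := ucov f K TT cc
  let L : ℕ → ℕ := fun i => LL i (useq f K TT cc i).1 (f.comp (useq f K TT cc i).2) (K+1+i)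
  let C : ∀ i, Set ((U (i+1)).P (L i)) :=
    fun i => CC i (useq f K TT cc i).1 (f.comp (useq f K TT cc i).2) (K+1+i)
  let N : ∀ n, Set ((limT (T := U) c).P n) := fun n => {y | ∃ i, L i ≤ n ∧
    ((limMap (T := U) c (i+1)).f (L i) ((limT (T := U) c).anc (L i) n y)) ∈ C i}
  have hN : ∀ n q, (limT (T := U) c).r n q ∈ N n → q ∈ N (n+1) := by
    rintro n q ⟨i, hi, h⟩
    refine ⟨i, by omega, ?_⟩
    rwa [anc_succ _ hi]
  obtain ⟨T'', d, M, D, hd⟩ := unravel_open (limT (T := U) c) (K+1) N hN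
  refine ⟨T'', ((limCov (T := U) c).comp d).mono (by omega), M, D, fun x hx => ?_⟩
  rw [← hd x hx]
  have hb := d.π.branch hx
  set y := fun n => d.π.f n (x n) with hy
  have key : ∀ i, ((fun n => f.f n ((limCov (T := U) c).π.f n (y n))) ∈ X i ↔
      (limMap (T := U) c (i+1)).f (L i) (y (L i)) ∈ C i) := by
    intro i
    have := hh i (useq f K TT cc i).1 (f.comp (useq f K TT cc i).2) (K+1+i)
      (fun n => (limMap (T := U) c (i+1)).f n (y n)) ((limMap (T := U) c (i+1)).branch hb)
    refine Iff.trans ?_ this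
    have e : ∀ n, (limCov (T := U) c).π.f n (y n) = (useq f K TT cc i).2.f n
        ((c i).π.f n ((limMap (T := U) c (i+1)).f n (y n))) := by
      intro n
      have e1 : (c i).π.f n ((limMap (T := U) c (i+1)).f n (y n)) = (y n).1 i := (y n).2 i
      rw [e1]
      exact (useq_apply f K TT cc n (y n) i).symm
    have e' : (fun n => f.f n ((limCov (T := U) c).π.f n (y n))) = fun n =>
        f.f n ((useq f K TT cc i).2.f n ((c i).π.f n ((limMap (T := U) c (i+1)).f n (y n)))) :=
      funext fun n => congrArg (f.f n) (e n)
    exact iff_of_eq (congrArg (fun z => z ∈ X i) e')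
  change (fun n => f.f n ((limCov (T := U) c).π.f n (y n))) ∈ _ ↔ ∃ n, y n ∈ N n
  rw [Set.mem_iUnion]
  constructor
  · rintro ⟨i, hi⟩
    refine ⟨L i, i, le_rfl, ?_⟩
    rw [anc_self]
    exact (key i).1 hi
  · rintro ⟨n, i, hi, h⟩
    rw [anc_branch _ hb hi] at h
    exact ⟨i, (key i).2 h⟩

theorem UU.det {T : GTree} {X : Set (∀ n, T.P n)} (h : UU T X) (hs : Subsingleton (T.P 0)) :
    (∃ σ : Strat T, ∀ x, T.IsBranch x → Cons σ 0 x → x ∈ X) ∨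
    (∃ σ : Strat T, ∀ x, T.IsBranch x → Cons σ 1 x → x ∉ X) := by
  classical
  obtain ⟨T', c, L, C, hC⟩ := h T (TMap.id T) 0
  have hs' : Subsingleton (T'.P 0) := (c.bij 0 le_rfl).1.subsingleton
  let A : ∀ n, Set (T'.P n) := fun n => {p | L ≤ n ∧ T'.anc L n p ∈ C}
  by_cases hw : T'.Win 0 A 0 T'.root
  · left
    obtain ⟨w, hw'⟩ := exists_win_strat T' 0 A
    refine ⟨c.φ 0 w, fun x hx hc => ?_⟩
    obtain ⟨x', hx', hc', hp⟩ := c.lift 0 (by omega) w x hx hc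
    obtain ⟨n, -, hn, hn'⟩ := hw' x' hx' 0 (by rwa [Subsingleton.elim (x' 0) T'.root])
      (fun n _ hn => hc' n hn)
    rw [anc_branch _ hx' hn] at hn'
    have := (hC x' hx').2 hn'
    have e : (fun n => (TMap.id T).f n (c.π.f n (x' n))) = x := funext hp
    rwa [e] at this
  · right
    have hst : ∀ n (p : T'.P n), ∃ q, T'.r n q = p ∧ (n % 2 = 1 → ¬ T'.Win 0 A n p →
        ¬ T'.Win 0 A (n+1) q) := by
      intro n p
      by_cases hn : n % 2 = 1 ∧ ¬ T'.Win 0 A n p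
      · by_contra! hcon
        apply hn.2
        apply Win.opp (by omega)
        intro q hq
        exact (hcon q hq).2.2
      · obtain ⟨q, hq⟩ := T'.surj n p
        exact ⟨q, hq, fun a b => absurd ⟨a, b⟩ hn⟩
    choose g hg1 hg2 using hst
    refine ⟨c.φ 1 ⟨g, hg1⟩, fun x hx hc => ?_⟩
    obtain ⟨x', hx', hc', hp⟩ := c.lift 1 (by omega) _ x hx hc
    have hall : ∀ n, ¬ T'.Win 0 A n (x' n) := by
      intro n
      induction n with
      | zero => rwa [Subsingleton.elim (x' 0) T'.root]
      | succ n ih =>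
        rcases Nat.mod_two_eq_zero_or_one n with e | e
        · intro hq
          apply ih
          have := Win.own e hq
          rwa [hx'] at this
        · rw [hc' n e]
          exact hg2 n _ e ih
    have : x' L ∉ C := fun h => hall L (Win.hit ⟨le_rfl, by rwa [anc_self]⟩)
    rw [← hC x' hx'] at this
    have e : (fun n => (TMap.id T).f n (c.π.f n (x' n))) = x := funext hp
    rwa [e] at this

/-- the binary tree -/
def T0 : GTree where
  P n := {s : Cantor // ∀ i ≥ n, s i = false}
  r n s := ⟨fun i => if i < n then s.1 i else false, fun i hi => if_neg (by omega)⟩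
  surj n s := ⟨⟨s.1, fun i hi => s.2 i (by omega)⟩, by
    apply Subtype.ext
    funext i
    by_cases h : i < n
    · simp [h]
    · simp [h, s.2 i (by omega)]⟩
  root := ⟨fun _ => false, fun _ _ => rfl⟩

def zz (x : ∀ n, T0.P n) : Cantor := fun i => (x (i+1)).1 i

def app (n : ℕ) (p : T0.P n) (b : Bool) : T0.P (n+1) :=
  ⟨fun i => if i = n then b else p.1 i, fun i hi => by
    simp only
    rw [if_neg (by omega), p.2 i (by omega)]⟩

theorem r_app (n : ℕ) (p : T0.P n) (b : Bool) : T0.r n (app n p b) = p := by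
  apply Subtype.ext
  funext i
  by_cases h : i < n
  · simp [T0, app, h, h.ne]
  · simp [T0, app, h, p.2 i (by omega)]

@[reducible] def MM : MeasurableSpace Cantor where
  MeasurableSet' B := UU T0 {x | zz x ∈ B}
  measurableSet_empty := UU.level 0 ∅ (by simp)
  measurableSet_compl B h := h.compl
  measurableSet_iUnion B h := by
    have := UU.iUnion h
    convert this using 1
    ext x; simp

theorem borel_UU {B : Set Cantor} (h : @MeasurableSet Cantor (borel Cantor) B) :
    UU T0 {x | zz x ∈ B} := by
  have hle : borel Cantor ≤ MM := by
    rw [← (inferInstance : BorelSpace Cantor).measurable_eq]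
    refine iSup_le fun i => ?_
    rintro _ ⟨s, -, rfl⟩
    exact UU.level (i+1) {p | p.1 i ∈ s} (fun x => Iff.rfl)
  exact hle _ h

/-- the play in which player `b` uses `σ` and the other plays the bits of `a` -/
def pl (σ : Strat T0) (b : ℕ) (a : Cantor) : ∀ n, T0.P n
  | 0 => T0.root
  | n+1 => if n % 2 = b then σ.f n (pl σ b a n) else app n (pl σ b a n) (a (n/2))

theorem pl_branch (σ : Strat T0) (b : ℕ) (a : Cantor) : T0.IsBranch (pl σ b a) := by
  intro n
  simp only [pl]
  split_ifs
  · exact σ.h _ _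
  · exact r_app _ _ _

theorem pl_cons (σ : Strat T0) (b : ℕ) (a : Cantor) : Cons σ b (pl σ b a) := by
  intro n hn
  simp only [pl, if_pos hn]

theorem pl_opp (σ : Strat T0) (b : ℕ) (a : Cantor) (n : ℕ) (h : n % 2 ≠ b) :
    zz (pl σ b a) n = a (n/2) := by
  simp [zz, pl, h, app]

theorem pl_dep (σ : Strat T0) (b : ℕ) (a a' : Cantor) (n : ℕ) (h : ∀ i < n, a i = a' i) :
    pl σ b a n = pl σ b a' n := by
  induction n with
  | zero => rfl
  | succ n ih =>
    simp only [pl]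
    rw [ih (fun i hi => h i (by omega)), h (n/2) (by omega)]

end GTree

theorem cont_of_dep {α : Type*} [TopologicalSpace α] (F : Cantor → α) (n : ℕ)
    (h : ∀ b b' : Cantor, (∀ i < n, b i = b' i) → F b = F b') : Continuous F := by
  let G : (Fin n → Bool) → α := fun t => F (fun i => if h : i < n then t ⟨i, h⟩ else false)
  have : F = G ∘ (fun b (i : Fin n) => b i) := by
    funext b
    apply h
    intro i hi
    simp [hi]
  rw [this]
  exact continuous_of_discreteTopology.comp (by fun_prop)

open GTree in
theorem wadge_lemma {A B : Set Cantor} (hA : @MeasurableSet Cantor (borel Cantor) A)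
    (hB : @MeasurableSet Cantor (borel Cantor) B) :
    WadgeLe A B ∨ ∃ g : Cantor → Cantor, Continuous g ∧ Bᶜ = g ⁻¹' A := by
  have hmeas : ∀ (e : Cantor → Cantor), Continuous e → ∀ C : Set Cantor,
      @MeasurableSet Cantor (borel Cantor) C → @MeasurableSet Cantor (borel Cantor) (e ⁻¹' C) := by
    intro e he C hC
    borelize Cantor
    exact he.measurable hC
  let ev : Cantor → Cantor := fun z i => z (2*i)
  let od : Cantor → Cantor := fun z i => z (2*i+1)
  have hev : Continuous ev := by fun_prop
  have hod : Continuous od := by fun_prop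
  have hplc : ∀ (σ : Strat T0) b (g : ℕ → ℕ), Continuous fun a => (fun i => zz (pl σ b a) (g i) : Cantor) := by
    intro σ b g
    refine continuous_pi fun i => cont_of_dep _ (g i + 1) fun a a' h => ?_
    simp only [zz]
    rw [pl_dep σ b a a' _ h]
  have hZ : @MeasurableSet Cantor (borel Cantor) {z | ¬ (ev z ∈ A ↔ od z ∈ B)} := by
    have h1 := hmeas ev hev A hA
    have h2 := hmeas od hod B hB
    have h3 := (h1.inter h2.compl).union (h1.compl.inter h2)
    convert h3 using 1
    ext z
    simp only [Set.mem_ofPred_eq, Set.mem_union, Set.mem_inter_iff, Set.mem_preimage,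
      Set.mem_compl_iff]
    tauto
  have hs : Subsingleton (T0.P 0) := ⟨fun s t => Subtype.ext (funext fun i => by
    rw [s.2 i (Nat.zero_le _), t.2 i (Nat.zero_le _)])⟩
  rcases (borel_UU hZ).det hs with ⟨σ, hσ⟩ | ⟨σ, hσ⟩
  · right
    refine ⟨fun a i => zz (pl σ 0 a) (2*i), hplc σ 0 _, ?_⟩
    ext a
    have := hσ _ (pl_branch σ 0 a) (pl_cons σ 0 a)
    have e : od (zz (pl σ 0 a)) = a := by
      funext i
      simp only [od]
      rw [pl_opp σ 0 a _ (by omega)]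
      congr 1
      omega
    simp only [Set.mem_ofPred_eq, e] at this
    simp only [Set.mem_compl_iff, Set.mem_preimage]
    change _ ↔ ev (zz (pl σ 0 a)) ∈ A
    tauto
  · left
    refine ⟨fun a i => zz (pl σ 1 a) (2*i+1), hplc σ 1 _, ?_⟩
    ext a
    have := hσ _ (pl_branch σ 1 a) (pl_cons σ 1 a)
    have e : ev (zz (pl σ 1 a)) = a := by
      funext i
      simp only [ev]
      rw [pl_opp σ 1 a _ (by omega)]
      congr 1
      omega
    simp only [Set.mem_ofPred_eq, e] at this
    simp only [Set.mem_preimage]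
    change _ ↔ od (zz (pl σ 1 a)) ∈ B
    tauto

namespace SI

def code (s : List Bool) : ℕ := Encodable.encode s

theorem code_inj : Function.Injective code := Encodable.encode_injective

def pre (x : Cantor) (k : ℕ) : List Bool := List.ofFn (fun i : Fin k => x i)

theorem pre_length (x : Cantor) (k : ℕ) : (pre x k).length = k := List.length_ofFn

theorem pre_get (x : Cantor) (k i : ℕ) : (pre x k)[i]? = if i < k then some (x i) else none := by
  unfold pre
  rw [List.getElem?_ofFn]
  split_ifs <;> rfl

def InB (x : Cantor) (n : ℕ) : Prop := ∃ k, n = code (pre x k)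

theorem inB_code {x : Cantor} {s : List Bool} : InB x (code s) ↔ s = pre x s.length := by
  constructor
  · rintro ⟨k, hk⟩
    have := code_inj hk
    subst this
    rw [pre_length]
  · intro h
    exact ⟨_, congrArg code h⟩

theorem fin_iff {P : ℕ → Prop} : {n | P n}.Finite ↔ ∃ N, ∀ n ≥ N, ¬ P n := by
  constructor
  · intro h
    obtain ⟨N, hN⟩ := h.bddAbove
    exact ⟨N+1, fun n hn hP => by have := hN hP; omega⟩
  · rintro ⟨N, hN⟩
    refine (Set.finite_lt_nat N).subset fun n hn => ?_
    by_contra h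
    exact hN n (not_lt.1 h) hn

theorem inf_iff {P : ℕ → Prop} : {n | P n}.Infinite ↔ ∀ N, ∃ n ≥ N, P n := by
  unfold Set.Infinite
  rw [fin_iff]
  push Not
  rfl

/-- there are arbitrarily large codes in any injective sequence -/
theorem exists_large {f : ℕ → List Bool} (hf : Function.Injective f) (N : ℕ) :
    ∃ k, N ≤ code (f k) := by
  by_contra! h
  have : Set.Finite (Set.range (code ∘ f)) := (Set.finite_lt_nat N).subset (by
    rintro _ ⟨k, rfl⟩; exact h k)
  exact Set.infinite_range_of_injective (code_inj.comp hf) this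

def RR (X : Set Cantor) : Set Cantor := {A | ∃ x ∈ X, {n | A n = true ∧ ¬ InB x n}.Finite}

theorem pre_inj (x : Cantor) : Function.Injective (pre x) := fun a b h => by
  have := congrArg List.length h
  rwa [pre_length, pre_length] at this

theorem RR_semiideal {X : Set Cantor} (hne : X.Nonempty) : IsSemiideal (RR X) := by
  refine ⟨?_, ?_, ?_, ?_⟩
  · obtain ⟨x, hx⟩ := hne
    exact ⟨x, hx, by simp⟩
  · rintro ⟨x, hx, hf⟩
    obtain ⟨N, hN⟩ := fin_iff.1 hf
    have hinj : Function.Injective (fun k => pre x k ++ [!(x k)]) := by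
      intro a b h
      have := congrArg List.length h
      simpa [pre_length] using this
    obtain ⟨k, hk⟩ := exists_large hinj N
    apply hN _ hk
    refine ⟨rfl, ?_⟩
    rw [inB_code]
    intro h
    have := congrArg (fun l => l[k]?) h
    rw [List.length_append, pre_length] at this
    simp only [pre_get] at this
    rw [List.getElem?_append_right (by rw [pre_length]), pre_length] at this
    simp at this
  · rintro A ⟨x, hx, hf⟩ B h
    exact ⟨x, hx, hf.subset fun n hn => ⟨h n hn.1, hn.2⟩⟩
  · rintro A ⟨x, hx, hf⟩ B h
    refine ⟨x, hx, (hf.union h).subset fun n hn => ?_⟩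
    by_cases e : A n = true
    · exact .inl ⟨e, hn.2⟩
    · right
      intro h
      exact e (h.trans hn.1)

open Classical in
noncomputable def bb (x : Cantor) : Cantor := fun n => decide (InB x n)

theorem inB_dep (n : ℕ) : ∃ k, ∀ x y : Cantor, (∀ i < k, x i = y i) → (InB x n ↔ InB y n) := by
  by_cases h : ∃ s, code s = n
  · obtain ⟨s, rfl⟩ := h
    refine ⟨s.length, fun x y h => ?_⟩
    rw [inB_code, inB_code]
    have : pre x s.length = pre y s.length := by
      unfold pre
      congr 1
      funext i
      exact h i i.2
    rw [this]
  · refine ⟨0, fun x y _ => ?_⟩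
    have : ∀ x, ¬ InB x n := by
      rintro x ⟨k, hk⟩
      exact h ⟨_, hk.symm⟩
    simp [this]

theorem bb_cont : Continuous bb := by
  refine continuous_pi fun n => ?_
  obtain ⟨k, hk⟩ := inB_dep n
  refine cont_of_dep _ k fun x y h => ?_
  simp only [bb]
  exact decide_eq_decide.2 (hk x y h)

theorem infinite_inB (x : Cantor) (N : ℕ) : ∃ k ≥ N, N ≤ code (pre x k) := by
  have hinj : Function.Injective (fun k => pre x (N + k)) :=
    (pre_inj x).comp (add_right_injective N)
  obtain ⟨k, hk⟩ := exists_large hinj N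
  exact ⟨N + k, by omega, hk⟩

theorem le_RR (X : Set Cantor) : WadgeLe X (RR X) := by
  refine ⟨bb, bb_cont, ?_⟩
  ext x
  constructor
  · intro hx
    refine ⟨x, hx, ?_⟩
    simp [bb]
  · rintro ⟨y, hy, hf⟩
    suffices x = y by rwa [this]
    funext i
    by_contra hne
    obtain ⟨N, hN⟩ := fin_iff.1 hf
    obtain ⟨k, hk, hk'⟩ := infinite_inB x (N + i + 1)
    apply hN _ (show N ≤ code (pre x k) by omega)
    refine ⟨by simpa [bb] using ⟨k, rfl⟩, ?_⟩
    rw [inB_code, pre_length]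
    intro h
    have := congrArg (fun l => l[i]?) h
    simp only [pre_get, if_pos (show i < k by omega)] at this
    exact hne (Option.some.inj this)

def Comp (n m : ℕ) : Prop := ∃ s t : List Bool, n = code s ∧ m = code t ∧ ∀ (i : ℕ) (a b : Bool), s[i]? = some a →
  t[i]? = some b → a = b

theorem inB_comp {x : Cantor} {n m : ℕ} (hn : InB x n) (hm : InB x m) : Comp n m := by
  obtain ⟨k, hk⟩ := hn
  obtain ⟨l, hl⟩ := hm
  refine ⟨_, _, hk, hl, fun i a b ha hb => ?_⟩
  rw [pre_get] at ha hb
  split_ifs at ha hb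
  exact (Option.some.inj ha).symm.trans (Option.some.inj hb)

def Ch (N : ℕ) : Set Cantor := {A | ∀ n ≥ N, ∀ m ≥ N, A n = true → A m = true → Comp n m}

theorem Ch_closed (N : ℕ) : IsClosed (Ch N) := by
  have : Ch N = ⋂ n : ℕ, ⋂ m : ℕ, {A | n ≥ N → m ≥ N → A n = true → A m = true → Comp n m} := by
    ext A
    simp only [Ch, Set.mem_ofPred_eq, Set.mem_iInter]
    exact ⟨fun h n m a b => h n a m b, fun h n a m b => h n m a b⟩
  rw [this]
  refine isClosed_iInter fun n => isClosed_iInter fun m => ?_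
  by_cases h : n ≥ N ∧ m ≥ N ∧ ¬ Comp n m
  · have e : {A : Cantor | n ≥ N → m ≥ N → A n = true → A m = true → Comp n m} =
      ({A : Cantor | A n = true} ∩ {A | A m = true})ᶜ := by
      ext A
      simp only [Set.mem_ofPred_eq, Set.mem_compl_iff, Set.mem_inter_iff]
      tauto
    rw [e]
    apply IsOpen.isClosed_compl
    apply IsOpen.inter
    · have h2 : Continuous fun A : Cantor => A n := continuous_apply n
      exact (isOpen_discrete ({true} : Set Bool)).preimage h2
    · have h2 : Continuous fun A : Cantor => A m := continuous_apply m
      exact (isOpen_discrete ({true} : Set Bool)).preimage h2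
  · have e : {A : Cantor | n ≥ N → m ≥ N → A n = true → A m = true → Comp n m} = Set.univ := by
      ext A
      simp only [Set.mem_ofPred_eq, Set.mem_univ, iff_true]
      tauto
    rw [e]; exact isClosed_univ

theorem RR_sub_Ch {X : Set Cantor} {A : Cantor} (h : A ∈ RR X) : ∃ N, A ∈ Ch N := by
  obtain ⟨x, hx, hf⟩ := h
  obtain ⟨N, hN⟩ := fin_iff.1 hf
  refine ⟨N, fun n hn m hm a b => inB_comp (x := x) ?_ ?_⟩
  · by_contra hc; exact hN n hn ⟨a, hc⟩
  · by_contra hc; exact hN m hm ⟨b, hc⟩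

/-- basic neighbourhoods in Cantor space -/
theorem nhd_basic {U : Set Cantor} (hU : IsOpen U) {x : Cantor} (hx : x ∈ U) :
    ∃ k, ∀ y : Cantor, (∀ i < k, y i = x i) → y ∈ U := by
  rw [isOpen_pi_iff] at hU
  obtain ⟨I, u, h1, h2⟩ := hU x hx
  refine ⟨I.sup id + 1, fun y hy => h2 fun i hi => ?_⟩
  rw [hy i (Nat.lt_succ_of_le (Finset.le_sup (f := id) hi))]
  exact (h1 i hi).2

theorem RR_first {X : Set Cantor} (hne : X.Nonempty) : FirstCategory (RR X) := by
  classical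
  refine ⟨fun N => {A | A.1 ∈ Ch N}, fun N => ?_, ?_⟩
  · have hcl : IsClosed {A : RR X | A.1 ∈ Ch N} := (Ch_closed N).preimage continuous_subtype_val
    rw [hcl.closure_eq, Set.eq_empty_iff_forall_notMem]
    intro A hA
    obtain ⟨V, hV, hAV⟩ := isOpen_induced_iff.1 (isOpen_interior (s := {A : RR X | A.1 ∈ Ch N}))
    rw [← hAV] at hA
    obtain ⟨k, hk⟩ := nhd_basic hV hA
    have inj1 : ∀ b : Bool, Function.Injective (fun j => b :: List.replicate j true) := by
      intro b i j h
      have := congrArg List.length h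
      simpa using this
    obtain ⟨i, hi⟩ := exists_large (inj1 true) (N + k)
    obtain ⟨j, hj⟩ := exists_large (inj1 false) (N + k)
    set n := code (true :: List.replicate i true)
    set m := code (false :: List.replicate j true)
    let B : Cantor := fun l => if l < k then A.1 l else decide (l = n ∨ l = m)
    have hB : B ∈ RR X := by
      obtain ⟨x, hx⟩ := hne
      refine ⟨x, hx, ?_⟩
      rw [fin_iff]
      refine ⟨k + n + m + 1, fun l hl hh => ?_⟩
      have : B l = false := by
        simp only [B]
        rw [if_neg (by omega)]
        simp; omega
      simp [this] at hh
    have hBV : (⟨B, hB⟩ : RR X) ∈ interior {A : RR X | A.1 ∈ Ch N} := by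
      rw [← hAV]
      exact hk B fun i hi => by simp [B, hi]
    have hBC : B ∈ Ch N := by
      have h2 := interior_subset hBV
      exact h2
    obtain ⟨s, t, hs, ht, hst⟩ := hBC n (by omega) m (by omega)
      (by simp only [B]; rw [if_neg (by omega)]; simp)
      (by simp only [B]; rw [if_neg (by omega)]; simp)
    have hs' := code_inj hs
    have ht' := code_inj ht
    subst hs' ht'
    exact absurd (hst 0 true false rfl rfl) (by simp)
  · symm
    rw [Set.eq_univ_iff_forall]
    intro A
    obtain ⟨N, hN⟩ := RR_sub_Ch A.2
    exact Set.mem_iUnion.2 ⟨N, hN⟩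

def Tr (i n : ℕ) : Prop := ∃ s, n = code s ∧ s[i]? = some true

open Classical in
noncomputable def xA (A : Cantor) : Cantor := fun i => decide (∀ N, ∃ n ≥ N, A n = true ∧ Tr i n)

theorem inB_tr {x : Cantor} {n i k : ℕ} (h : n = code (pre x k)) (hi : i < k) :
    Tr i n ↔ x i = true := by
  subst h
  constructor
  · rintro ⟨s, hs, hs'⟩
    have := code_inj hs
    subst this
    rw [pre_get, if_pos hi] at hs'
    exact Option.some.inj hs'
  · intro hx
    exact ⟨_, rfl, by rw [pre_get, if_pos hi, hx]⟩

theorem finite_short (x : Cantor) (i : ℕ) : ∃ N, ∀ k, N ≤ code (pre x k) → i < k := by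
  refine ⟨(Finset.range (i+1)).sup (fun k => code (pre x k)) + 1, fun k hk => ?_⟩
  by_contra h
  have := Finset.le_sup (f := fun k => code (pre x k)) (Finset.mem_range.2 (show k < i + 1 by omega))
  omega

theorem xA_eq {A x : Cantor} (hinf : {n | A n = true}.Infinite)
    (h : {n | A n = true ∧ ¬ InB x n}.Finite) : xA A = x := by
  obtain ⟨M, hM⟩ := fin_iff.1 h
  rw [inf_iff] at hinf
  funext i
  obtain ⟨L, hL⟩ := finite_short x i
  have key : ∀ n, n ≥ M + L → A n = true → (Tr i n ↔ x i = true) := by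
    intro n hn hA
    have : InB x n := by by_contra hc; exact hM n (by omega) ⟨hA, hc⟩
    obtain ⟨k, hk⟩ := this
    exact inB_tr hk (hL k (by omega))
  by_cases hx : x i = true
  · rw [hx]
    simp only [xA, decide_eq_true_eq]
    intro N
    obtain ⟨n, hn, hA⟩ := hinf (N + (M + L))
    exact ⟨n, by omega, hA, (key n (by omega) hA).2 hx⟩
  · rw [Bool.not_eq_true] at hx
    rw [hx]
    simp only [xA, decide_eq_false_iff_not]
    intro hc
    obtain ⟨n, hn, hA, ht⟩ := hc (M + L)
    rw [key n hn hA, hx] at ht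
    exact absurd ht (by simp)

theorem RR_iff {X : Set Cantor} (hne : X.Nonempty) (A : Cantor) : A ∈ RR X ↔
    {n | A n = true}.Finite ∨ (xA A ∈ X ∧ {n | A n = true ∧ ¬ InB (xA A) n}.Finite) := by
  constructor
  · rintro ⟨x, hx, hf⟩
    by_cases hA : {n | A n = true}.Finite
    · exact .inl hA
    · right
      rw [xA_eq hA hf]
      exact ⟨hx, hf⟩
  · rintro (h | ⟨h1, h2⟩)
    · obtain ⟨x, hx⟩ := hne
      exact ⟨x, hx, h.subset fun n hn => hn.1⟩
    · exact ⟨_, h1, h2⟩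

theorem meas_coord (n : ℕ) : MeasurableSet {A : Cantor | A n = true} :=
  measurableSet_eq_fun (measurable_pi_apply n) measurable_const

theorem RR_meas {X : Set Cantor} (hne : X.Nonempty) (hX : MeasurableSet X) :
    MeasurableSet (RR X) := by
  have hx : Measurable xA := by
    refine measurable_pi_lambda _ fun i => ?_
    refine measurable_to_bool ?_
    have : (fun A => xA A i) ⁻¹' {true} = ⋂ N : ℕ, ⋃ n : ℕ, {A : Cantor | n ≥ N ∧ A n = true ∧ Tr i n} := by
      ext A
      simp [xA]
    rw [this]
    refine MeasurableSet.iInter fun N => MeasurableSet.iUnion fun n => ?_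
    by_cases h : n ≥ N ∧ Tr i n
    · convert meas_coord n using 1
      ext A; simp only [Set.mem_ofPred_eq]; tauto
    · convert MeasurableSet.empty using 1
      ext A; simp only [Set.mem_ofPred_eq, Set.mem_empty_iff_false]; tauto
  have hbb : Measurable bb := bb_cont.measurable
  have e : RR X = (⋃ N : ℕ, ⋂ n : ℕ, {A | n ≥ N → ¬ A n = true}) ∪ (xA ⁻¹' X ∩
      ⋃ N : ℕ, ⋂ n : ℕ, {A | n ≥ N → ¬ (A n = true ∧ ¬ (bb (xA A)) n = true)}) := by
    ext A
    rw [RR_iff hne, fin_iff, fin_iff]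
    simp [bb]
  rw [e]
  refine MeasurableSet.union (MeasurableSet.iUnion fun N => MeasurableSet.iInter fun n => ?_)
    ((hx hX).inter (MeasurableSet.iUnion fun N => MeasurableSet.iInter fun n => ?_))
  · exact (MeasurableSet.const (n ≥ N)).imp (meas_coord n).compl
  · exact (MeasurableSet.const (n ≥ N)).imp
      ((meas_coord n).inter ((hbb.comp hx) (meas_coord n)).compl).compl

end SI

namespace SI

theorem long_large (i : ℕ) : ∃ M, ∀ s : List Bool, M ≤ code s → i < s.length := by
  have hf : (code '' {s : List Bool | s.length ≤ i}).Finite :=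
    (List.finite_length_le Bool i).image _
  obtain ⟨M, hM⟩ := hf.bddAbove
  refine ⟨M + 1, fun s hs => ?_⟩
  by_contra h
  have := hM ⟨s, not_lt.1 h, rfl⟩
  omega

theorem chain_inB {A : Cantor} {N : ℕ} (hA : A ∈ Ch N) (hinf : {n | A n = true}.Infinite)
    {n : ℕ} (hn : N ≤ n) (hAn : A n = true) : InB (xA A) n := by
  obtain ⟨s, _, hs, -, -⟩ := hA n hn n hn hAn hAn
  rw [hs, inB_code]
  rw [inf_iff] at hinf
  have key : ∀ i (a : Bool), s[i]? = some a → xA A i = a := by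
    intro i a ha
    have comp : ∀ m ≥ N, A m = true → ∀ t : List Bool, m = code t → ∀ b, t[i]? = some b → a = b := by
      intro m hm hAm t ht b hb
      obtain ⟨s', t', hs', ht', h⟩ := hA n hn m hm hAn hAm
      have e1 : s = s' := code_inj (hs.symm.trans hs')
      have e2 : t = t' := code_inj (ht.symm.trans ht')
      subst e1 e2
      exact h i a b ha hb
    cases a with
    | true =>
      simp only [xA, decide_eq_true_eq]
      intro M
      obtain ⟨L, hL⟩ := long_large i
      obtain ⟨m, hm, hAm⟩ := hinf (M + L + N)
      obtain ⟨t, _, ht, -, -⟩ := hA m (by omega) m (by omega) hAm hAm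
      refine ⟨m, by omega, hAm, t, ht, ?_⟩
      have hlen := hL t (by omega)
      have hb := comp m (by omega) hAm t ht _ (List.getElem?_eq_getElem hlen)
      rw [List.getElem?_eq_getElem hlen, ← hb]
    | false =>
      simp only [xA, decide_eq_false_iff_not]
      intro h
      obtain ⟨m, hm, hAm, t, ht, hti⟩ := h N
      exact absurd (comp m hm hAm t ht _ hti) (by simp)
  apply List.ext_getElem?
  intro i
  rw [pre_get]
  split_ifs with h
  · have := List.getElem?_eq_getElem h
    rw [this, key i _ this]
  · rw [List.getElem?_eq_none (not_lt.1 h)]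

theorem meager_of_first {X : Set Cantor} (hfc : FirstCategory X) :
    ∃ K : ℕ → Set Cantor, (∀ n, IsClosed (K n)) ∧ (∀ n, interior (K n) = ∅) ∧ X ⊆ ⋃ n, K n := by
  obtain ⟨f, hf, hu⟩ := hfc
  refine ⟨fun n => closure (Subtype.val '' (f n)), fun n => isClosed_closure, fun n => ?_, ?_⟩
  · rw [Set.eq_empty_iff_forall_notMem]
    intro x hx
    have hV : IsOpen (interior (closure (Subtype.val '' (f n)))) := isOpen_interior
    set V := interior (closure (Subtype.val '' (f n))) with hVdef
    have hx2 := interior_subset hx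
    rw [mem_closure_iff] at hx2
    obtain ⟨_, hy, y, hyf, rfl⟩ := hx2 V hV hx
    have : y ∈ interior (closure (f n)) := by
      rw [mem_interior]
      refine ⟨Subtype.val ⁻¹' V, fun z hz => ?_, hV.preimage continuous_subtype_val, hy⟩
      rw [closure_subtype]
      exact interior_subset hz
    rw [hf n] at this
    exact this
  · intro x hx
    have : (⟨x, hx⟩ : X) ∈ ⋃ n, f n := hu ▸ Set.mem_univ _
    obtain ⟨n, hn⟩ := Set.mem_iUnion.1 this
    exact Set.mem_iUnion.2 ⟨n, subset_closure ⟨_, hn, rfl⟩⟩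

theorem open_coord (n : ℕ) (b : Bool) : IsOpen {A : Cantor | A n = b} := by
  have h2 : Continuous fun A : Cantor => A n := continuous_apply n
  exact (isOpen_discrete ({b} : Set Bool)).preimage h2

theorem contOn_of {f : Cantor → Cantor} {G : Set Cantor}
    (h : ∀ i, ∀ u ∈ G, ∃ V, IsOpen V ∧ u ∈ V ∧ ∀ v ∈ V ∩ G, f v i = f u i) : ContinuousOn f G := by
  rw [continuousOn_pi]
  intro i u hu
  obtain ⟨V, hV, huV, hh⟩ := h i u hu
  refine ContinuousWithinAt.congr_of_eventuallyEq (f := fun _ => f u i)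
    continuousWithinAt_const ?_ rfl
  filter_upwards [inter_mem_nhdsWithin G (hV.mem_nhds huV)] with v hv
  exact hh v ⟨hv.2, hv.1⟩

theorem flip_from_g {X : Set Cantor} (hne : X.Nonempty) (hfc : FirstCategory X)
    {g : Cantor → Cantor} (hg : Continuous g) (hXg : Xᶜ = g ⁻¹' (RR X)) :
    ∃ (U G : Set Cantor) (f : Cantor → Cantor), IsOpen U ∧ U.Nonempty ∧ IsGδ G ∧ G ⊆ U ∧ X ∩ U ⊆ G ∧
      ContinuousOn f G ∧ ∀ u ∈ G, (u ∈ X ↔ f u ∉ X) := by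
  obtain ⟨K, hK1, hK2, hK3⟩ := meager_of_first hfc
  have hmem : ∀ u, u ∈ X ↔ g u ∉ RR X := by
    intro u
    have : u ∈ Xᶜ ↔ u ∈ g ⁻¹' (RR X) := by rw [hXg]
    simp only [Set.mem_compl_iff, Set.mem_preimage] at this
    tauto
  obtain ⟨N, hN⟩ : ∃ N, (interior (g ⁻¹' (Ch N))).Nonempty := by
    have hcl : ∀ j : ℕ ⊕ ℕ, IsClosed (Sum.elim K (fun N => g ⁻¹' (Ch N)) j) := by
      rintro (j | j)
      · exact hK1 j
      · exact (Ch_closed j).preimage hg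
    obtain ⟨j, hj⟩ := nonempty_interior_of_iUnion_of_closed hcl (by
      rw [Set.eq_univ_iff_forall]
      intro u
      by_cases hu : u ∈ X
      · obtain ⟨n, hn⟩ := Set.mem_iUnion.1 (hK3 hu)
        exact Set.mem_iUnion.2 ⟨.inl n, hn⟩
      · obtain ⟨N, hN⟩ := RR_sub_Ch (not_not.1 (fun h => hu ((hmem u).2 h)))
        exact Set.mem_iUnion.2 ⟨.inr N, hN⟩)
    rcases j with j | j
    · simp only [Sum.elim_inl, hK2 j] at hj
      exact absurd hj Set.not_nonempty_empty
    · exact ⟨j, hj⟩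
  set U := interior (g ⁻¹' (Ch N)) with hU
  have hfin : ∀ u ∈ U, g u ∈ Ch N := fun u hu => interior_subset (s := g ⁻¹' (Ch N)) hu
  have hUo : IsOpen U := isOpen_interior
  have hsub : X ∩ U ⊆ {u | u ∈ U ∧ {n | g u n = true}.Infinite} := by
    rintro u ⟨hX, hu⟩
    refine ⟨hu, fun hf => (hmem u).1 hX ((RR_iff hne _).2 (.inl hf))⟩
  refine ⟨U, {u | u ∈ U ∧ {n | g u n = true}.Infinite}, fun u => xA (g u), hUo, hN, ?_,
    fun u hu => hu.1, hsub, ?_, ?_⟩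
  · have : {u | u ∈ U ∧ {n | g u n = true}.Infinite} =
        U ∩ ⋂ M : ℕ, ⋃ n : ℕ, {u | n ≥ M ∧ g u n = true} := by
      ext u
      simp [inf_iff]
    rw [this]
    refine hUo.isGδ.inter (IsGδ.iInter fun M => (isOpen_iUnion fun n => ?_).isGδ)
    by_cases h : n ≥ M
    · convert (open_coord n true).preimage hg using 1
      ext u; simp [h]
    · convert isOpen_empty using 1
      ext u; simp; omega
  · apply contOn_of
    rintro i u ⟨hu, hinf⟩
    obtain ⟨L, hL⟩ := long_large i
    obtain ⟨n, hn, hA⟩ := inf_iff.1 hinf (N + L)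
    refine ⟨g ⁻¹' {A | A n = true}, (open_coord n true).preimage hg, hA, ?_⟩
    rintro v ⟨hv, hvU, hvinf⟩
    obtain ⟨s, _, hs, -, -⟩ := hfin u hu n (by omega) n (by omega) hA hA
    have h1 := chain_inB (hfin u hu) hinf (show N ≤ n by omega) hA
    have h2 := chain_inB (hfin v hvU) hvinf (show N ≤ n by omega) hv
    rw [hs, inB_code] at h1 h2
    have h3 := congrArg (fun l => l[i]?) (h2.symm.trans h1)
    have hlen := hL s (by omega)
    simp only [pre_get, if_pos hlen] at h3
    exact Option.some.inj h3
  · rintro u ⟨hu, hinf⟩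
    rw [hmem, RR_iff hne]
    have : {n | g u n = true ∧ ¬ InB (xA (g u)) n}.Finite := by
      rw [fin_iff]
      exact ⟨N, fun n hn h => h.2 (chain_inB (hfin u hu) hinf hn h.1)⟩
    have h2 : ¬ {n | g u n = true}.Finite := hinf
    tauto

end SI

namespace SI

def BB (Y : Set Cantor) : Prop :=
  ∃ c : Cantor → ℕ, (∀ i, IsGδ {u | i < c u}) ∧ ∀ u, u ∈ Y ↔ Odd (c u)

theorem fs_of_gd {A : Set Cantor} (h : IsGδ Aᶜ) : IsFsigma A := by
  obtain ⟨f, hf, he⟩ := isGδ_iff_eq_iInter_nat.1 h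
  refine ⟨fun n => (f n)ᶜ, fun n => (hf n).isClosed_compl, ?_⟩
  rw [← Set.compl_iInter, ← he, compl_compl]

theorem dom_of_bb {Y : Set Cantor} (h : BB Y) : DOmegaSigmaTwo Y := by
  obtain ⟨c, hc, hY⟩ := h
  refine ⟨fun n => {u | c u ≤ n}, fun n => fs_of_gd ?_, fun m n hmn u hu => ?_, ?_⟩
  · convert hc n using 1
    ext u; simp
  · exact le_trans hu hmn
  · ext u
    rw [hY]
    simp only [Set.mem_iUnion, Set.mem_sdiff, Set.mem_ofPred_eq, exists_prop, not_exists, not_and,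
      not_le]
    constructor
    · intro h
      exact ⟨c u, h, le_rfl, fun m hm => hm⟩
    · rintro ⟨n, hn, h1, h2⟩
      have : c u = n := by
        apply le_antisymm h1
        by_contra hlt
        exact lt_irrefl _ (h2 (c u) (by omega))
      rwa [this]

theorem BB.op {Y Z : Set Cantor} (hY : BB Y) (hZ : BB Z) (φ : Prop → Prop → Prop) :
    BB {u | φ (u ∈ Y) (u ∈ Z)} := by
  classical
  obtain ⟨c, hc, hY⟩ := hY
  obtain ⟨d, hd, hZ⟩ := hZ
  have hc' : ∀ i, IsGδ {u | i ≤ c u} := by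
    rintro (_ | i)
    · simp
    · exact hc i
  have hd' : ∀ i, IsGδ {u | i ≤ d u} := by
    rintro (_ | i)
    · simp
    · exact hd i
  let E : ℕ → ℕ → ℕ := fun a b => 2 * (a + b) + if φ (Odd a) (Odd b) then 1 else 0
  have hE : ∀ a b a' b', a ≤ a' → b ≤ b' → E a b ≤ E a' b' := by
    intro a b a' b' h1 h2
    by_cases h : a = a' ∧ b = b'
    · rw [h.1, h.2]
    · simp only [E]
      split_ifs <;> omega
  refine ⟨fun u => E (c u) (d u), fun i => ?_, fun u => ?_⟩
  · have : {u | i < E (c u) (d u)} = ⋃ q ∈ {q : ℕ × ℕ | q.1 ≤ i + 1 ∧ q.2 ≤ i + 1 ∧ i < E q.1 q.2},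
        ({u | q.1 ≤ c u} ∩ {u | q.2 ≤ d u}) := by
      ext u
      simp only [Set.mem_iUnion, Set.mem_ofPred_eq, Set.mem_inter_iff, exists_prop, Prod.exists]
      constructor
      · intro h
        refine ⟨min (c u) (i+1), min (d u) (i+1), ⟨by omega, by omega, ?_⟩, by omega, by omega⟩
        by_cases h' : c u ≤ i + 1 ∧ d u ≤ i + 1
        · rwa [min_eq_left h'.1, min_eq_left h'.2]
        · simp only [E]
          omega
      · rintro ⟨a, b, ⟨_, _, h⟩, h1, h2⟩
        exact lt_of_lt_of_le h (hE _ _ _ _ h1 h2)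
    rw [this]
    refine IsGδ.biUnion ?_ fun q _ => (hc' _).inter (hd' _)
    refine ((Set.finite_Iic (i+1)).prod (Set.finite_Iic (i+1))).subset ?_
    rintro q ⟨h1, h2, -⟩
    exact ⟨h1, h2⟩
  · simp only [Set.mem_ofPred_eq, hY, hZ, E]
    split_ifs with h
    · simp [h]
    · simp [h]

theorem BB.inter {Y Z : Set Cantor} (hY : BB Y) (hZ : BB Z) : BB (Y ∩ Z) := hY.op hZ And
theorem BB.union {Y Z : Set Cantor} (hY : BB Y) (hZ : BB Z) : BB (Y ∪ Z) := hY.op hZ Or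
theorem BB.diff {Y Z : Set Cantor} (hY : BB Y) (hZ : BB Z) : BB (Y \ Z) :=
  hY.op hZ fun a b => a ∧ ¬ b
theorem BB.compl {Y : Set Cantor} (hY : BB Y) : BB Yᶜ := hY.op hY fun a b => ¬ a

theorem bb_gd {G : Set Cantor} (hG : IsGδ G) : BB G := by
  classical
  refine ⟨fun u => if u ∈ G then 1 else 0, fun i => ?_, fun u => ?_⟩
  · rcases i with _ | i
    · convert hG using 1
      ext u
      by_cases h : u ∈ G <;> simp [h]
    · convert IsGδ.empty using 1
      ext u
      by_cases h : u ∈ G <;> simp [h]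
  · by_cases h : u ∈ G <;> simp [h]

theorem delta_of_bb {Y : Set Cantor} (h : BB Y) : InDelta Y :=
  ⟨dom_of_bb h, dom_of_bb h.compl⟩

theorem gd_pre {β : Type*} [TopologicalSpace β] {D : Set Cantor} (hD : IsGδ D) {f : Cantor → β}
    (hf : ContinuousOn f D) {S : Set β} (hS : IsGδ S) : IsGδ {u | u ∈ D ∧ f u ∈ S} := by
  obtain ⟨O, hO, he⟩ := isGδ_iff_eq_iInter_nat.1 hS
  have h : ∀ n, ∃ V, IsOpen V ∧ f ⁻¹' O n ∩ D = V ∩ D := fun n =>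
    (continuousOn_iff'.1 hf) (O n) (hO n)
  choose V hV hVD using h
  have : {u | u ∈ D ∧ f u ∈ S} = D ∩ ⋂ n, V n := by
    ext u
    rw [he]
    simp only [Set.mem_ofPred_eq, Set.mem_inter_iff, Set.mem_iInter]
    refine and_congr_right fun hu => forall_congr' fun n => ?_
    have : u ∈ f ⁻¹' O n ∩ D ↔ u ∈ V n ∩ D := by rw [hVD]
    simpa [hu] using this
  rw [this]
  exact hD.inter (IsGδ.iInter_of_isOpen hV)

theorem bb_pre {D : Set Cantor} (hD : IsGδ D) {f : Cantor → Cantor} (hf : ContinuousOn f D)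
    {S : Set Cantor} (hS : BB S) : BB {u | u ∈ D ∧ f u ∈ S} := by
  classical
  obtain ⟨c, hc, hS⟩ := hS
  refine ⟨fun u => if u ∈ D then c (f u) else 0, fun i => ?_, fun u => ?_⟩
  · convert gd_pre hD hf (hc i) using 1
    ext u
    by_cases h : u ∈ D <;> simp [h]
  · by_cases h : u ∈ D <;> simp [h, hS]

theorem bb_iUnion {X : Set Cantor} {V : ℕ → Set Cantor} (hV : ∀ n, IsClopen (V n))
    (h : ∀ n, BB (X ∩ V n)) : BB (X ∩ ⋃ n, V n) := by
  classical
  choose c hc hX using h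
  have key : ∀ u n, u ∈ V n → (∀ j < n, u ∉ V j) →
      ∀ n', u ∈ V n' → (∀ j < n', u ∉ V j) → n' = n := by
    intro u n h1 h2 n' h3 h4
    rcases lt_trichotomy n' n with h | h | h
    · exact absurd h3 (h2 _ h)
    · exact h
    · exact absurd h1 (h4 _ h)
  have hex : ∀ u, (∃ n, u ∈ V n) → ∃ n, u ∈ V n ∧ ∀ j < n, u ∉ V j := fun u h =>
    ⟨Nat.find h, Nat.find_spec h, fun j hj => Nat.find_min h hj⟩
  refine ⟨fun u => if h : ∃ n, u ∈ V n then c (Nat.find h) u else 0, fun m => ?_, fun u => ?_⟩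
  · have hO : ∀ n, ∃ O : ℕ → Set Cantor, (∀ k, IsOpen (O k)) ∧ {u | m < c n u} = ⋂ k, O k :=
      fun n => isGδ_iff_eq_iInter_nat.1 (hc n m)
    choose O hO he using hO
    have he' : ∀ n u, m < c n u ↔ ∀ k, u ∈ O n k := by
      intro n u
      have : u ∈ {u | m < c n u} ↔ u ∈ ⋂ k, O n k := by rw [he]
      simpa using this
    have : {u | m < if h : ∃ n, u ∈ V n then c (Nat.find h) u else 0} =
        ⋂ k, ⋃ n, (V n ∩ (⋂ j ∈ {j | j < n}, (V j)ᶜ) ∩ O n k) := by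
      ext u
      simp only [Set.mem_ofPred_eq, Set.mem_iInter, Set.mem_iUnion, Set.mem_inter_iff,
        Set.mem_compl_iff]
      constructor
      · intro h k
        split_ifs at h with hn
        · exact ⟨Nat.find hn, ⟨Nat.find_spec hn, fun j hj => Nat.find_min hn hj⟩,
            (he' _ _).1 h k⟩
        · omega
      · intro h
        have hn : ∃ n, u ∈ V n := by
          obtain ⟨n, h1, _⟩ := h 0
          exact ⟨n, h1.1⟩
        rw [dif_pos hn, he']
        intro k
        obtain ⟨n, ⟨h1, h2⟩, h3⟩ := h k
        rw [key u n h1 h2 _ (Nat.find_spec hn) fun j hj => Nat.find_min hn hj]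
        exact h3
    rw [this]
    refine IsGδ.iInter_of_isOpen fun k => isOpen_iUnion fun n => ?_
    refine ((hV n).2.inter ?_).inter (hO n k)
    exact (Set.finite_lt_nat n).isOpen_biInter fun j _ => (hV j).1.isOpen_compl
  · beta_reduce
    by_cases hn : ∃ n, u ∈ V n
    · rw [dif_pos hn, ← hX]
      simp [hn, Nat.find_spec hn]
    · rw [dif_neg hn]
      simp [hn]

/-- Extension of continuous maps to Gδ sets. -/
theorem extend_map {X : Set Cantor} (hd : Dense X) (j : X → Cantor) (hj : Continuous j) :
    ∃ (H : Set Cantor) (φ : Cantor → Cantor), IsGδ H ∧ X ⊆ H ∧ ContinuousOn φ H ∧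
      ∀ x : X, φ x = j x := by
  classical
  let O : ℕ → Bool → Set Cantor := fun i b =>
    {u | ∃ V, IsOpen V ∧ u ∈ V ∧ ∀ x : X, x.1 ∈ V → j x i = b}
  have hO : ∀ i b, IsOpen (O i b) := by
    intro i b
    rw [isOpen_iff_forall_mem_open]
    rintro u ⟨V, hV, hu, h⟩
    exact ⟨V, fun v hv => ⟨V, hV, hv, h⟩, hV, hu⟩
  have hdis : ∀ i u b b', u ∈ O i b → u ∈ O i b' → b = b' := by
    rintro i u b b' ⟨V, hV, hu, h⟩ ⟨V', hV', hu', h'⟩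
    obtain ⟨x, hxV, hx⟩ := hd.inter_open_nonempty (V ∩ V') (hV.inter hV') ⟨u, hu, hu'⟩
    exact (h ⟨x, hx⟩ hxV.1).symm.trans (h' ⟨x, hx⟩ hxV.2)
  have hXO : ∀ x : X, ∀ i, x.1 ∈ O i (j x i) := by
    intro x i
    have hc : Continuous fun y => j y i := (continuous_apply i).comp hj
    obtain ⟨V, hV, he⟩ := isOpen_induced_iff.1 ((isOpen_discrete ({j x i} : Set Bool)).preimage hc)
    have hm : ∀ y : X, y.1 ∈ V ↔ j y i = j x i := by
      intro y
      have : y ∈ Subtype.val ⁻¹' V ↔ y ∈ (fun y => j y i) ⁻¹' {j x i} := by rw [he]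
      simpa using this
    exact ⟨V, hV, (hm x).2 rfl, fun y hy => (hm y).1 hy⟩
  let φ : Cantor → Cantor := fun u i => decide (u ∈ O i true)
  have hφ : ∀ u i b, u ∈ O i b → φ u i = b := by
    intro u i b h
    cases b with
    | true => simpa [φ] using h
    | false =>
      simp only [φ, decide_eq_false_iff_not]
      intro h'
      exact absurd (hdis i u _ _ h h') (by simp)
  refine ⟨⋂ i, (O i false ∪ O i true), φ, IsGδ.iInter_of_isOpen fun i => (hO i _).union (hO i _),
    ?_, ?_, ?_⟩
  · intro x hx
    rw [Set.mem_iInter]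
    intro i
    have := hXO ⟨x, hx⟩ i
    cases hb : j ⟨x, hx⟩ i with
    | true => rw [hb] at this; exact .inr this
    | false => rw [hb] at this; exact .inl this
  · apply contOn_of
    intro i u hu
    obtain ⟨b, hb⟩ : ∃ b, u ∈ O i b := by
      rcases Set.mem_iInter.1 hu i with h | h
      · exact ⟨_, h⟩
      · exact ⟨_, h⟩
    refine ⟨O i b, hO i b, hb, fun v hv => ?_⟩
    rw [hφ v i b hv.1, hφ u i b hb]
  · intro x
    funext i
    exact hφ _ _ _ (hXO x i)

theorem lavrentiev {X : Set Cantor} (hd : Dense X) (h : X ≃ₜ X) :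
    ∃ (H : Set Cantor) (φ : Cantor → Cantor), IsGδ H ∧ X ⊆ H ∧ ContinuousOn φ H ∧
      (∀ x : X, φ x = h x) ∧ ∀ u ∈ H, (φ u ∈ X ↔ u ∈ X) := by
  obtain ⟨H1, φ, g1, s1, c1, e1⟩ := extend_map hd (fun x => (h x).1)
    (continuous_subtype_val.comp h.continuous)
  obtain ⟨H2, ψ, g2, s2, c2, e2⟩ := extend_map hd (fun x => (h.symm x).1)
    (continuous_subtype_val.comp h.symm.continuous)
  have g3 := gd_pre g1 c1 g2
  have c3 : ContinuousOn (fun u => (ψ (φ u), u)) {u | u ∈ H1 ∧ φ u ∈ H2} := by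
    refine ContinuousOn.prodMk ?_ continuousOn_id
    exact c2.comp (c1.mono fun u hu => hu.1) fun u hu => hu.2
  have g4 := gd_pre g3 c3 (isClosed_diagonal (X := Cantor)).isGδ
  refine ⟨_, φ, g4, ?_, c1.mono fun u hu => hu.1.1, e1, ?_⟩
  · intro x hx
    have h1 := e1 ⟨x, hx⟩
    refine ⟨⟨s1 hx, ?_⟩, ?_⟩
    · show φ x ∈ H2
      rw [h1]
      exact s2 (h ⟨x, hx⟩).2
    · show ψ (φ x) = x
      rw [h1, e2]
      simp
  · rintro u ⟨⟨h1, h2⟩, h3⟩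
    have h3' : ψ (φ u) = u := h3
    constructor
    · intro hu
      rw [← h3', e2 ⟨φ u, hu⟩]
      exact (h.symm ⟨φ u, hu⟩).2
    · intro hu
      rw [e1 ⟨u, hu⟩]
      exact (h ⟨u, hu⟩).2

/-- moving points of `X`. -/
theorem mover {X : Set Cantor} (hd : Dense X) (hhom : IsHomogeneous X) {x y : Cantor}
    (hx : x ∈ X) (hy : y ∈ X) {W : Set Cantor} (hW : IsOpen W) (hyW : y ∈ W) :
    ∃ (H V : Set Cantor) (φ : Cantor → Cantor), IsGδ H ∧ X ⊆ H ∧ ContinuousOn φ H ∧ IsOpen V ∧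
      x ∈ V ∧ (∀ u ∈ H, (φ u ∈ X ↔ u ∈ X)) ∧ ∀ u ∈ V ∩ H, φ u ∈ W := by
  obtain ⟨h, hh⟩ := hhom ⟨x, hx⟩ ⟨y, hy⟩
  obtain ⟨H, φ, g, s, c, e, p⟩ := lavrentiev hd h
  obtain ⟨V, hV, he⟩ := continuousOn_iff'.1 c W hW
  have hm : ∀ u, (φ u ∈ W ∧ u ∈ H) ↔ (u ∈ V ∧ u ∈ H) := by
    intro u
    have : u ∈ φ ⁻¹' W ∩ H ↔ u ∈ V ∩ H := by rw [he]
    exact this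
  refine ⟨H, V, φ, g, s, c, hV, ((hm x).1 ⟨?_, s hx⟩).1, p, fun u hu => ((hm u).2 hu).1⟩
  rw [e ⟨x, hx⟩, hh]
  exact hyW

theorem cyl_clopen (s : List Bool) : IsClopen {u : Cantor | pre u s.length = s} := by
  have : Continuous fun u : Cantor => decide (pre u s.length = s) := by
    refine cont_of_dep _ s.length fun x y h => ?_
    have : pre x s.length = pre y s.length := by
      unfold pre
      congr 1
      funext i
      exact h i i.2
    rw [this]
  convert (isClopen_discrete ({true} : Set Bool)).preimage this using 1
  ext u
  simp

theorem bb_local {X : Set Cantor} (hd : Dense X) (hhom : IsHomogeneous X) (hdel : ¬ InDelta X)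
    {W : Set Cantor} (hW : IsOpen W) (hne : W.Nonempty) : ¬ BB (X ∩ W) := by
  classical
  intro hbb
  apply hdel
  apply delta_of_bb
  obtain ⟨y, hyW, hyX⟩ := hd.inter_open_nonempty W hW hne
  let V : ℕ → Set Cantor := fun n =>
    {u | ∃ s : List Bool, n = code s ∧ BB (X ∩ {u | pre u s.length = s}) ∧ pre u s.length = s}
  have hV : ∀ n, V n = ∅ ∨ ∃ s : List Bool, BB (X ∩ {u | pre u s.length = s}) ∧
      V n = {u | pre u s.length = s} := by
    intro n
    by_cases h : ∃ s : List Bool, n = code s ∧ BB (X ∩ {u | pre u s.length = s})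
    · right
      obtain ⟨s, hs, hb⟩ := h
      refine ⟨s, hb, ?_⟩
      ext u
      constructor
      · rintro ⟨t, ht, _, h⟩
        have e : t = s := code_inj (ht.symm.trans hs)
        subst e
        exact h
      · intro h
        exact ⟨s, hs, hb, h⟩
    · left
      rw [Set.eq_empty_iff_forall_notMem]
      rintro u ⟨s, hs, hb, _⟩
      exact h ⟨s, hs, hb⟩
  have := bb_iUnion (X := X) (V := V) (fun n => by
    rcases hV n with h | ⟨s, _, h⟩
    · rw [h]; exact isClopen_empty
    · rw [h]; exact cyl_clopen s) (fun n => by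
    rcases hV n with h | ⟨s, hb, h⟩
    · rw [h, Set.inter_empty]; exact bb_gd IsGδ.empty
    · rw [h]; exact hb)
  rwa [Set.inter_eq_left.2] at this
  intro x hx
  obtain ⟨H, V', φ, g, s, c, hVo, hxV, hp, hm⟩ := mover hd hhom hx hyX hW hyW
  obtain ⟨k, hk⟩ := nhd_basic hVo hxV
  refine Set.mem_iUnion.2 ⟨code (pre x k), pre x k, rfl, ?_, by rw [pre_length]⟩
  have hsub : {u : Cantor | pre u (pre x k).length = pre x k} ⊆ V' := by
    intro u hu
    apply hk
    intro i hi
    have hu' : pre u (pre x k).length = pre x k := hu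
    rw [pre_length] at hu'
    have := congrArg (fun l => l[i]?) hu'
    simp only [pre_get, if_pos hi] at this
    exact Option.some.inj this
  have hcl := (cyl_clopen (pre x k)).2
  have hbb2 := bb_pre (hcl.isGδ.inter g) (c.mono Set.inter_subset_right) hbb
  convert hbb2 using 1
  ext u
  constructor
  · rintro ⟨h1, h2⟩
    exact ⟨⟨h2, s h1⟩, (hp u (s h1)).2 h1, hm u ⟨hsub h2, s h1⟩⟩
  · rintro ⟨⟨h1, h2⟩, h3, h4⟩
    exact ⟨(hp u h2).1 h3, h1⟩

theorem step_lemma {X : Set Cantor} (hd : Dense X) (hhom : IsHomogeneous X) (hdel : ¬ InDelta X)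
    {U G : Set Cantor} {f : Cantor → Cantor} (hU : IsOpen U) (hUne : U.Nonempty) (hG : IsGδ G)
    (hGU : G ⊆ U) (hXG : X ∩ U ⊆ G) (hf : ContinuousOn f G)
    (hfl : ∀ u ∈ G, (u ∈ X ↔ f u ∉ X)) {W : Set Cantor} (hW : IsOpen W) (hWne : W.Nonempty) :
    ∃ (W' D : Set Cantor) (t : Bool → Cantor → Cantor), IsOpen W' ∧ W'.Nonempty ∧ IsGδ D ∧ D ⊆ W' ∧
      (∀ b, ContinuousOn (t b) D) ∧ (∀ b, ∀ u ∈ D, t b u ∈ W) ∧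
      (∀ u ∈ D, (t false u ∈ X ↔ u ∈ X)) ∧ (∀ u ∈ D, (t true u ∈ X ↔ u ∉ X)) ∧
      BB (X ∩ (W' \ D)) := by
  obtain ⟨p, hpG, hpX⟩ : ∃ p ∈ G, p ∉ X := by
    by_contra! h
    apply bb_local hd hhom hdel hU hUne
    have : X ∩ U = G := Set.Subset.antisymm hXG fun u hu => ⟨h u hu, hGU hu⟩
    rw [this]
    exact bb_gd hG
  have hy : f p ∈ X := by
    have := hfl p hpG
    tauto
  obtain ⟨w, hwW, hwX⟩ := hd.inter_open_nonempty W hW hWne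
  obtain ⟨H1, V1, φ1, g1, s1, c1, o1, m1, p1, q1⟩ := mover hd hhom hy hwX hW hwW
  obtain ⟨U1, hU1, he⟩ := continuousOn_iff'.1 hf V1 o1
  have hm : ∀ u, (f u ∈ V1 ∧ u ∈ G) ↔ (u ∈ U1 ∧ u ∈ G) := by
    intro u
    have : u ∈ f ⁻¹' V1 ∩ G ↔ u ∈ U1 ∩ G := by rw [he]
    exact this
  obtain ⟨x, ⟨hxU1, hxU⟩, hxX⟩ := hd.inter_open_nonempty (U1 ∩ U) (hU1.inter hU)
    ⟨p, ((hm p).1 ⟨m1, hpG⟩).1, hGU hpG⟩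
  obtain ⟨H2, V2, φ2, g2, s2, c2, o2, m2, p2, q2⟩ := mover hd hhom hxX hwX hW hwW
  have gD := gd_pre hG hf g1
  have oW : IsOpen (V2 ∩ (U1 ∩ U)) := o2.inter (hU1.inter hU)
  refine ⟨V2 ∩ (U1 ∩ U), (V2 ∩ (U1 ∩ U)) ∩ (H2 ∩ {u | u ∈ G ∧ f u ∈ H1}),
    fun b => bif b then φ1 ∘ f else φ2, oW, ⟨x, m2, hxU1, hxU⟩, oW.isGδ.inter (g2.inter gD),
    Set.inter_subset_left, ?_, ?_, ?_, ?_, ?_⟩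
  · rintro (_ | _)
    · exact c2.mono fun u hu => hu.2.1
    · exact c1.comp (hf.mono fun u hu => hu.2.2.1) fun u hu => hu.2.2.2
  · rintro (_ | _) u ⟨⟨h1, h2, h3⟩, h4, h5, h6⟩
    · exact q2 u ⟨h1, h4⟩
    · exact q1 (f u) ⟨((hm u).2 ⟨h2, h5⟩).1, h6⟩
  · rintro u ⟨⟨h1, h2, h3⟩, h4, h5, h6⟩
    exact p2 u h4
  · rintro u ⟨⟨h1, h2, h3⟩, h4, h5, h6⟩
    have a := p1 (f u) h6
    have b := hfl u h5
    show φ1 (f u) ∈ X ↔ _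
    tauto
  · have hbb := (bb_gd (oW.isGδ.inter hG)).diff (bb_gd gD)
    convert hbb using 1
    ext u
    constructor
    · rintro ⟨h1, h2, h3⟩
      refine ⟨⟨h2, hXG ⟨h1, h2.2.2⟩⟩, fun h4 => h3 ⟨h2, s2 h1, h4⟩⟩
    · rintro ⟨⟨h2, h3⟩, h4⟩
      refine ⟨?_, h2, fun h5 => h4 h5.2.2⟩
      rw [hfl u h3]
      intro h
      exact h4 ⟨h3, s1 h⟩

end SI

namespace SI

structure St (X : Set Cantor) where
  W : Set Cantor
  E : Set Cantor
  O : ℕ → Set Cantor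
  fam : Set ((Cantor → Cantor) × (ℕ → Set Cantor))
  W_open : IsOpen W
  W_ne : W.Nonempty
  E_eq : E = ⋂ j, O j
  E_gd : IsGδ E
  E_sub : E ⊆ W
  bb : BB (X ∩ (W \ E))
  fin : fam.Finite
  id_mem : (id, O) ∈ fam
  fam_cont : ∀ q ∈ fam, ContinuousOn q.1 E
  fam_open : ∀ q ∈ fam, ∀ j, IsOpen (q.2 j)
  fam_maps : ∀ q ∈ fam, ∀ u ∈ E, ∀ j, q.1 u ∈ q.2 j

def initSt (X : Set Cantor) : St X where
  W := Set.univ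
  E := Set.univ
  O := fun _ => Set.univ
  fam := {(id, fun _ => Set.univ)}
  W_open := isOpen_univ
  W_ne := Set.univ_nonempty
  E_eq := by simp
  E_gd := IsGδ.univ
  E_sub := Set.Subset.rfl
  bb := by simpa using bb_gd IsGδ.empty
  fin := Set.finite_singleton _
  id_mem := rfl
  fam_cont := by rintro q rfl; exact continuousOn_id
  fam_open := by rintro q rfl j; exact isOpen_univ
  fam_maps := by rintro q rfl u hu j; trivial

structure IsStep {X : Set Cantor} (n : ℕ) (S S' : St X) (t : Bool → Cantor → Cantor)
    (p : Cantor) : Prop where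
  p_mem : p ∈ S.E
  t_cont : ∀ b, ContinuousOn (t b) S'.E
  t_maps : ∀ b, ∀ u ∈ S'.E, t b u ∈ S.E
  t_false : ∀ u ∈ S'.E, (t false u ∈ X ↔ u ∈ X)
  t_true : ∀ u ∈ S'.E, (t true u ∈ X ↔ u ∉ X)
  small : ∀ q ∈ S.fam, ∃ M ≥ n, (∀ j ≤ n, ∀ y : Cantor, (∀ i < M, y i = q.1 p i) → y ∈ q.2 j) ∧
    ∀ b, ∀ u ∈ S'.E, ∀ i < M, q.1 (t b u) i = q.1 p i
  fam_next : ∀ q ∈ S.fam, ∀ b, (q.1 ∘ t b, q.2) ∈ S'.fam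

theorem open_agree (y : Cantor) (M : ℕ) : IsOpen {v : Cantor | ∀ i < M, v i = y i} := by
  have : {v : Cantor | ∀ i < M, v i = y i} = ⋂ i ∈ {i | i < M}, {v : Cantor | v i = y i} := by
    ext v; simp
  rw [this]
  exact (Set.finite_lt_nat M).isOpen_biInter fun i _ => open_coord i _

theorem exists_step {X : Set Cantor} (hloc : ∀ W : Set Cantor, IsOpen W → W.Nonempty → ¬ BB (X ∩ W))
    (hstep : ∀ W : Set Cantor, IsOpen W → W.Nonempty →
      ∃ (W' D : Set Cantor) (t : Bool → Cantor → Cantor), IsOpen W' ∧ W'.Nonempty ∧ IsGδ D ∧ D ⊆ W' ∧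
      (∀ b, ContinuousOn (t b) D) ∧ (∀ b, ∀ u ∈ D, t b u ∈ W) ∧
      (∀ u ∈ D, (t false u ∈ X ↔ u ∈ X)) ∧ (∀ u ∈ D, (t true u ∈ X ↔ u ∉ X)) ∧
      BB (X ∩ (W' \ D))) (n : ℕ) (S : St X) :
    ∃ (S' : St X) (t : Bool → Cantor → Cantor) (p : Cantor), IsStep n S S' t p := by
  obtain ⟨p, hp⟩ : S.E.Nonempty := by
    by_contra h
    rw [Set.not_nonempty_iff_eq_empty] at h
    apply hloc S.W S.W_open S.W_ne
    have := S.bb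
    rwa [h, Set.sdiff_empty] at this
  have h1 : ∀ q : (Cantor → Cantor) × (ℕ → Set Cantor), ∃ (M : ℕ) (V : Set Cantor), IsOpen V ∧
      p ∈ V ∧ (q ∈ S.fam → M ≥ n ∧
      (∀ j ≤ n, ∀ y : Cantor, (∀ i < M, y i = q.1 p i) → y ∈ q.2 j) ∧
      ∀ u ∈ V ∩ S.E, ∀ i < M, q.1 u i = q.1 p i) := by
    intro q
    by_cases hq : q ∈ S.fam
    · have hO : IsOpen (⋂ j ∈ {j | j ≤ n}, q.2 j) :=
        (Set.finite_le_nat n).isOpen_biInter fun j _ => S.fam_open q hq j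
      obtain ⟨k, hk⟩ := nhd_basic hO (x := q.1 p) (by
        simp only [Set.mem_iInter]
        intro j _
        exact S.fam_maps q hq p hp j)
      obtain ⟨V, hV, he⟩ := continuousOn_iff'.1 (S.fam_cont q hq) _ (open_agree (q.1 p) (n + k))
      have hm : ∀ u, ((∀ i < n + k, q.1 u i = q.1 p i) ∧ u ∈ S.E) ↔ (u ∈ V ∧ u ∈ S.E) := by
        intro u
        have : u ∈ q.1 ⁻¹' {v : Cantor | ∀ i < n + k, v i = q.1 p i} ∩ S.E ↔ u ∈ V ∩ S.E := by
          rw [he]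
        exact this
      refine ⟨n + k, V, hV, ((hm p).1 ⟨fun i _ => rfl, hp⟩).1, fun _ => ⟨by omega, ?_, ?_⟩⟩
      · intro j hj y hy
        have := hk y fun i hi => hy i (by omega)
        simp only [Set.mem_iInter] at this
        exact this j hj
      · intro u hu
        exact ((hm u).2 hu).1
    · exact ⟨0, Set.univ, isOpen_univ, trivial, fun h => absurd h hq⟩
  choose M V hVo hpV hMV using h1
  have hW : IsOpen (S.W ∩ ⋂ q ∈ S.fam, V q) :=
    S.W_open.inter (S.fin.isOpen_biInter fun q _ => hVo q)
  obtain ⟨W', D, t, hW', hW'ne, gD, hDW, tc, tm, tf, tt, hbb⟩ := hstep _ hW ⟨p, S.E_sub hp, by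
    simp only [Set.mem_iInter]
    exact fun q _ => hpV q⟩
  have gE : IsGδ {u | (u ∈ D ∧ t false u ∈ S.E) ∧ t true u ∈ S.E} :=
    gd_pre (gd_pre gD (tc false) S.E_gd) ((tc true).mono fun u hu => hu.1) S.E_gd
  obtain ⟨O, hO, hE⟩ := isGδ_iff_eq_iInter_nat.1 gE
  set E : Set Cantor := {u | (u ∈ D ∧ t false u ∈ S.E) ∧ t true u ∈ S.E} with hEdef
  have hED : ∀ u ∈ E, u ∈ D := fun u hu => hu.1.1
  have htE : ∀ b, ∀ u ∈ E, t b u ∈ S.E := by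
    rintro (_ | _) u hu
    · exact hu.1.2
    · exact hu.2
  have htc : ∀ b, ContinuousOn (t b) E := fun b => (tc b).mono hED
  let S' : St X :=
    { W := W'
      E := E
      O := O
      fam := {(id, O)} ∪ ((fun q => (q.1 ∘ t false, q.2)) '' S.fam ∪
        (fun q => (q.1 ∘ t true, q.2)) '' S.fam)
      W_open := hW'
      W_ne := hW'ne
      E_eq := hE
      E_gd := gE
      E_sub := fun u hu => hDW (hED u hu)
      bb := by
        have b1 := bb_pre gD (tc false) S.bb
        have b2 := bb_pre gD (tc true)
          (((bb_gd S.W_open.isGδ).diff (bb_gd S.E_gd)).diff S.bb)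
        convert hbb.union (b1.union b2) using 1
        ext u
        constructor
        · rintro ⟨hX, hu, hnE⟩
          by_cases hD : u ∈ D
          · right
            by_cases h0 : t false u ∈ S.E
            · right
              have h1 : t true u ∉ S.E := fun h => hnE ⟨⟨hD, h0⟩, h⟩
              have h2 : t true u ∉ X := fun h => (tt u hD).1 h hX
              exact ⟨hD, ⟨(tm true u hD).1, h1⟩, fun h => h2 h.1⟩
            · left
              exact ⟨hD, (tf u hD).2 hX, (tm false u hD).1, h0⟩
          · exact .inl ⟨hX, hu, hD⟩
        · rintro (⟨h1, h2, h3⟩ | ⟨hD, h1, h2, h3⟩ | ⟨hD, ⟨h1, h2⟩, h3⟩)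
          · exact ⟨h1, h2, fun h => h3 (hED u h)⟩
          · exact ⟨(tf u hD).1 h1, hDW hD, fun h => h3 (htE false u h)⟩
          · refine ⟨?_, hDW hD, fun h => h2 (htE true u h)⟩
            by_contra hX
            exact h3 ⟨(tt u hD).2 hX, h1, h2⟩
      fin := (Set.finite_singleton _).union ((S.fin.image _).union (S.fin.image _))
      id_mem := .inl rfl
      fam_cont := by
        rintro q (rfl | ⟨q, hq, rfl⟩ | ⟨q, hq, rfl⟩)
        · exact continuousOn_id
        · exact (S.fam_cont q hq).comp (htc false) (htE false)
        · exact (S.fam_cont q hq).comp (htc true) (htE true)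
      fam_open := by
        rintro q (rfl | ⟨q, hq, rfl⟩ | ⟨q, hq, rfl⟩)
        · exact hO
        · exact S.fam_open q hq
        · exact S.fam_open q hq
      fam_maps := by
        rintro q (rfl | ⟨q, hq, rfl⟩ | ⟨q, hq, rfl⟩) u hu
        · rw [hE, Set.mem_iInter] at hu
          exact hu
        · exact S.fam_maps q hq _ (htE false u hu)
        · exact S.fam_maps q hq _ (htE true u hu) }
  refine ⟨S', t, p, hp, htc, htE, fun u hu => tf u (hED u hu), fun u hu => tt u (hED u hu), ?_, ?_⟩
  · intro q hq
    obtain ⟨a1, a2, a3⟩ := hMV q hq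
    refine ⟨M q, a1, a2, fun b u hu => a3 _ ⟨?_, htE b u hu⟩⟩
    have := (tm b u (hED u hu)).2
    simp only [Set.mem_iInter] at this
    exact this q hq
  · rintro q hq (_ | _)
    · exact .inr (.inl ⟨q, hq, rfl⟩)
    · exact .inr (.inr ⟨q, hq, rfl⟩)

def compd (t : ℕ → Bool → Cantor → Cantor) (z : Cantor) (k : ℕ) : ℕ → Cantor → Cantor
  | 0 => id
  | d + 1 => compd t z k d ∘ t (k + d) (z (k + d))

theorem compd_add (t : ℕ → Bool → Cantor → Cantor) (z : Cantor) (k d e : ℕ) :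
    compd t z k (d + e) = compd t z k d ∘ compd t z (k + d) e := by
  induction e with
  | zero => rfl
  | succ e ih =>
    rw [← add_assoc]
    simp only [compd]
    rw [ih, Function.comp_assoc, add_assoc]

theorem compd_one (t : ℕ → Bool → Cantor → Cantor) (z : Cantor) (k e : ℕ) :
    compd t z k (1 + e) = t k (z k) ∘ compd t z (k + 1) e := by
  rw [compd_add]
  rfl

theorem compd_dep (t : ℕ → Bool → Cantor → Cantor) {z z' : Cantor} (k d : ℕ)
    (h : ∀ j, k ≤ j → j < k + d → z j = z' j) : compd t z k d = compd t z' k d := by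
  induction d with
  | zero => rfl
  | succ d ih =>
    simp only [compd]
    rw [ih fun j h1 h2 => h j h1 (by omega), h (k + d) (by omega) (by omega)]

def flipz (m : ℕ) (z : Cantor) : Cantor := Function.update z m (!(z m))

theorem flipz_invol (m : ℕ) (z : Cantor) : flipz m (flipz m z) = z := by
  funext i
  by_cases h : i = m
  · subst h; simp [flipz]
  · simp [flipz, h]

theorem flipz_cont (m : ℕ) : Continuous (flipz m) := by
  refine continuous_pi fun i => ?_
  refine cont_of_dep _ (m + i + 1) fun x y h => ?_
  by_cases e : i = m
  · subst e; simp [flipz, h i (by omega)]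
  · simp [flipz, e, h i (by omega)]

def flipH (m : ℕ) : Cantor ≃ₜ Cantor where
  toFun := flipz m
  invFun := flipz m
  left_inv := flipz_invol m
  right_inv := flipz_invol m
  continuous_toFun := flipz_cont m
  continuous_invFun := flipz_cont m

theorem no_flip {S : Set Cantor} (hS : MeasurableSet S) (h : ∀ m z, flipz m z ∈ S ↔ z ∉ S) :
    False := by
  obtain ⟨u, hu, he⟩ := hS.residualEq_isOpen
  have he' : ∀ᶠ z in residual Cantor, z ∈ S ↔ z ∈ u := by
    filter_upwards [he] with z hz
    exact iff_of_eq hz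
  have hfl : ∀ m, ∀ᶠ z in residual Cantor, flipz m z ∈ S ↔ flipz m z ∈ u := by
    intro m
    have := (flipH m).residual_map_eq
    have h2 : ∀ᶠ z in Filter.map (flipH m) (residual Cantor), z ∈ S ↔ z ∈ u := by
      rw [this]; exact he'
    exact h2
  have hden : ∀ m, Dense {z | (z ∈ S ↔ z ∈ u) ∧ (flipz m z ∈ S ↔ flipz m z ∈ u)} := fun m =>
    dense_of_mem_residual (he'.and (hfl m))
  by_cases hne : u.Nonempty
  · obtain ⟨x, hx⟩ := hne
    obtain ⟨k, hk⟩ := nhd_basic hu hx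
    obtain ⟨z, hz1, hz2, hz3⟩ := (hden k).inter_open_nonempty _ (open_agree x k) ⟨x, fun _ _ => rfl⟩
    have a1 : z ∈ u := hk z hz1
    have a2 : flipz k z ∈ u := hk _ fun i hi => by
      have : i ≠ k := by omega
      simp [flipz, this, hz1 i hi]
    exact (h k z).1 (hz3.2 a2) (hz2.2 a1)
  · rw [Set.not_nonempty_iff_eq_empty] at hne
    obtain ⟨z, -, hz2, hz3⟩ := (hden 0).inter_open_nonempty _ isOpen_univ Set.univ_nonempty
    have := h 0 z
    simp only [hne, Set.mem_empty_iff_false, iff_false] at hz2 hz3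
    exact hz3 (this.2 hz2)

theorem martin_monk {X : Set Cantor} (hX : MeasurableSet X)
    (hstep : ∀ (n : ℕ) (S : St X), ∃ (S' : St X) (t : Bool → Cantor → Cantor) (p : Cantor),
      IsStep n S S' t p) : False := by
  choose nx tt pp hst using hstep
  let S : ℕ → St X := fun n => Nat.rec (initSt X) (fun n s => nx n s) n
  let t : ℕ → Bool → Cantor → Cantor := fun n => tt n (S n)
  let p : ℕ → Cantor := fun n => pp n (S n)
  have hs : ∀ n, IsStep n (S n) (S (n+1)) (t n) (p n) := fun n => hst n (S n)
  clear_value S t p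
  have cm : ∀ z k d, ∀ u ∈ (S (k + d)).E, compd t z k d u ∈ (S k).E := by
    intro z k d
    induction d with
    | zero => exact fun u hu => hu
    | succ d ih => exact fun u hu => ih _ ((hs (k + d)).t_maps _ u hu)
  have cf : ∀ z k d, (compd t z k d, (S k).O) ∈ (S (k + d)).fam := by
    intro z k d
    induction d with
    | zero => exact (S k).id_mem
    | succ d ih => exact (hs (k + d)).fam_next _ ih _
  have ag : ∀ z k d, ∃ M ≥ k + d, (∀ j ≤ k + d, ∀ y : Cantor,
      (∀ i < M, y i = compd t z k d (p (k + d)) i) → y ∈ (S k).O j) ∧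
      ∀ d' ≥ d, ∀ i < M, compd t z k d' (p (k + d')) i = compd t z k d (p (k + d)) i := by
    intro z k d
    obtain ⟨M, h1, h2, h3⟩ := (hs (k + d)).small _ (cf z k d)
    refine ⟨M, h1, h2, fun d' hd' i hi => ?_⟩
    obtain ⟨e, rfl⟩ := Nat.exists_eq_add_of_le hd'
    rcases e with _ | e
    · rfl
    · rw [compd_add, add_comm e 1, compd_one]
      have hm : compd t z (k + d + 1) e (p (k + (d + (1 + e)))) ∈ (S (k + d + 1)).E := by
        apply cm
        have := (hs (k + d + 1 + e)).p_mem
        have e2 : k + (d + (1 + e)) = k + d + 1 + e := by omega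
        rw [e2]
        exact this
      exact h3 _ _ hm i hi
  let U : Cantor → ℕ → Cantor := fun z k i => compd t z k (i + 1) (p (k + (i + 1))) i
  have Uag : ∀ z k d, ∃ M ≥ k + d, (∀ j ≤ k + d, ∀ y : Cantor,
      (∀ i < M, y i = U z k i) → y ∈ (S k).O j) ∧
      ∀ i < M, U z k i = compd t z k d (p (k + d)) i := by
    intro z k d
    obtain ⟨M, h1, h2, h3⟩ := ag z k d
    have key : ∀ i < M, U z k i = compd t z k d (p (k + d)) i := by
      intro i hi
      obtain ⟨M', h1', h2', h3'⟩ := ag z k (i + 1)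
      rw [← h3 (d + (i + 1)) (by omega) i hi]
      exact (h3' (d + (i + 1)) (by omega) i (by omega)).symm
    exact ⟨M, h1, fun j hj y hy => h2 j hj y fun i hi => (hy i hi).trans (key i hi), key⟩
  have UE : ∀ z k, U z k ∈ (S k).E := by
    intro z k
    rw [(S k).E_eq, Set.mem_iInter]
    intro j
    obtain ⟨M, h1, h2, h3⟩ := Uag z k j
    exact h2 j (by omega) _ fun _ _ => rfl
  have Urec : ∀ z k, U z k = t k (z k) (U z (k + 1)) := by
    intro z k
    funext i
    have hc := (hs k).t_cont (z k)
    obtain ⟨V, hV, he⟩ := continuousOn_iff'.1 hc _ (open_coord i (t k (z k) (U z (k + 1)) i))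
    have hm : ∀ u, (t k (z k) u i = t k (z k) (U z (k + 1)) i ∧ u ∈ (S (k+1)).E) ↔
        (u ∈ V ∧ u ∈ (S (k+1)).E) := by
      intro u
      have : u ∈ t k (z k) ⁻¹' {A : Cantor | A i = t k (z k) (U z (k + 1)) i} ∩ (S (k+1)).E ↔
        u ∈ V ∩ (S (k+1)).E := by rw [he]
      exact this
    obtain ⟨N, hN⟩ := nhd_basic hV ((hm (U z (k+1))).1 ⟨rfl, UE z (k+1)⟩).1
    obtain ⟨M, h1, h2, h3⟩ := Uag z (k+1) (N + i)
    obtain ⟨M', h1', h2', h3'⟩ := Uag z k (1 + (N + i))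
    rw [h3' i (by omega), compd_one, ← add_assoc]
    exact ((hm _).2 ⟨hN _ fun l hl => (h3 l (by omega)).symm,
      cm z (k+1) (N+i) _ (hs (k + 1 + (N + i))).p_mem⟩).1
  have Udep : ∀ z z' k, (∀ j ≥ k, z j = z' j) → U z k = U z' k := by
    intro z z' k h
    funext i
    simp only [U]
    rw [compd_dep t k (i+1) fun j h1 _ => h j h1]
  have Ucont : Continuous fun z => U z 0 := by
    refine continuous_pi fun i => ?_
    refine cont_of_dep _ (i + 1) fun z z' h => ?_
    simp only [U]
    rw [compd_dep t 0 (i+1) fun j _ h2 => h j (by omega)]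
  have memf : ∀ z k, z k = false → (U z k ∈ X ↔ U z (k+1) ∈ X) := by
    intro z k h
    rw [Urec z k, h]
    exact (hs k).t_false _ (UE z (k+1))
  have memt : ∀ z k, z k = true → (U z k ∈ X ↔ U z (k+1) ∉ X) := by
    intro z k h
    rw [Urec z k, h]
    exact (hs k).t_true _ (UE z (k+1))
  refine no_flip (S := {z | U z 0 ∈ X}) (Ucont.measurable hX) fun m z => ?_
  have hfm : flipz m z m = !(z m) := by simp [flipz]
  have hfn : ∀ i, i ≠ m → flipz m z i = z i := fun i hi => by simp [flipz, hi]
  have main : ∀ e ≤ m, (U (flipz m z) (m - e) ∈ X ↔ U z (m - e) ∉ X) := by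
    intro e
    induction e with
    | zero =>
      intro _
      rw [Nat.sub_zero]
      have h1 : U (flipz m z) (m+1) = U z (m+1) :=
        Udep _ _ _ fun j hj => hfn j (by omega)
      cases hz : z m with
      | true =>
        rw [memf (flipz m z) m (by rw [hfm, hz]; rfl), memt z m hz, h1]
        tauto
      | false =>
        rw [memt (flipz m z) m (by rw [hfm, hz]; rfl), memf z m hz, h1]
    | succ e ih =>
      intro he
      have ih := ih (by omega)
      have e1 : m - e = m - (e + 1) + 1 := by omega
      rw [e1] at ih
      have h2 := hfn (m - (e + 1)) (by omega)
      cases hz : z (m - (e + 1)) with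
      | true =>
        rw [memt _ _ (h2.trans hz), memt z _ hz]
        tauto
      | false =>
        rw [memf _ _ (h2.trans hz), memf z _ hz]
        tauto
  have := main m le_rfl
  rw [Nat.sub_self] at this
  exact this

end SI

theorem firstCategory_wadge_semiideal (X : Set Cantor)
    (hB : @MeasurableSet Cantor (borel Cantor) X) (hd : Dense X)
    (hhom : IsHomogeneous X) (hfc : FirstCategory X) (hdel : ¬ InDelta X) :
    ∃ R : Set Cantor, IsSemiideal R ∧ FirstCategory R ∧ WadgeEquiv R X := by
  have hne : X.Nonempty := hd.nonempty
  have hmeq : (inferInstance : MeasurableSpace Cantor) = borel Cantor :=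
    (inferInstance : BorelSpace Cantor).measurable_eq
  have hX : MeasurableSet X := by
    have h := hB
    rw [← hmeq] at h
    exact h
  have hR : @MeasurableSet Cantor (borel Cantor) (SI.RR X) := by
    rw [← hmeq]
    exact SI.RR_meas hne hX
  refine ⟨SI.RR X, SI.RR_semiideal hne, SI.RR_first hne, ?_, SI.le_RR X⟩
  rcases wadge_lemma hR hB with h | ⟨g, hg, hgX⟩
  · exact h
  · exfalso
    obtain ⟨U, G, f, h1, h2, h3, h4, h5, h6, h7⟩ := SI.flip_from_g hne hfc hg hgX
    exact SI.martin_monk hX (SI.exists_step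
      (fun W hW hWne => SI.bb_local hd hhom hdel hW hWne)
      (fun W hW hWne => SI.step_lemma hd hhom hdel h1 h2 h3 h4 h5 h6 h7 hW hWne))
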